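/- arXiv:2110.12431 — 4 statements merged into one kernel-verified Lean document; each statement's English description precedes it below -/
import Mathlib

section
/- Let X be an injective (hyperconvex) metric space, and let G, H be groups of isometries of X with X^G ≠ ∅ and X^H ≠ ∅. Then for any n ∈ ℕ and any x ∈ X^G, there exists y ∈ X^G such that: if n ≥ 1, then diam((GH)^{2^{n−1}} · y) ≤ (1/2) · diam((GH)^{2^n} · x); and if n = 0, then diam(H · y) ≤ (1/2) · diam(GH · x). -/
open Pointwise

/-- An injective (hyperconvex) metric space: every family of closed balls whose
radii pairwise satisfy the triangle condition has a common point. -/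
def IsInjectiveSpace (X : Type*) [MetricSpace X] : Prop :=
  ∀ S : Set (X × ℝ),
    (∀ p ∈ S, ∀ q ∈ S, dist p.1 q.1 ≤ p.2 + q.2) →
    ∃ y : X, ∀ p ∈ S, dist p.1 y ≤ p.2

/-- The fixed-point set of a subgroup of the isometry group. -/
def fixedSet {X : Type*} [MetricSpace X] (G : Subgroup (X ≃ᵢ X)) : Set X :=
  {x : X | ∀ g ∈ G, g x = x}

/-- The orbit of a point under a set of isometries. -/
def orbitSet {X : Type*} [MetricSpace X] (S : Set (X ≃ᵢ X)) (x : X) : Set X :=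
  (fun f : X ≃ᵢ X => f x) '' S

/-!
In an injective space, a function `f` with `dist a b ≤ f a + f b` can be tightened, naturally in `f`
and without increasing sup-distances, to an extremal function, and an extremal function is the
distance to a point `y`. So `y` is moved by an isometry `u` at most as far as `f` differs from
`f ∘ u`.

Apply this to `f z = (dist z x + sup_{a ∈ A} dist z a) / 2` with `A = (GH)^m · x`. Both summands are
`G`-invariant, so `G` fixes `y`. If `u ∈ (GH)^m G`, a set closed under inversion, then `u` carries
the first summand below the second, and the second below the first plus `diam A`, so `y` moves at
most `diam A / 2`. Finally two elements of `(GH)^k` differ by an element of `(GH)^(2k) G`, and two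
elements of `H` by an element of `GH`.
-/

open Filter Topology

section TightSpan

variable {X Y : Type*} [PseudoMetricSpace X] [PseudoMetricSpace Y] {f g : X → ℝ} {c : ℝ}

/-- The functions `f` with `dist a b ≤ f a + f b`, among which the tight span of `X` consists of the
pointwise minimal ones. -/
def DominatesDist (f : X → ℝ) : Prop :=
  ∀ a b, dist a b ≤ f a + f b

/-- The conjugate `f*` of `f`: when `f` dominates the distance, it is extremal if and only if
`f ≤ f*`. It is only meaningful when the supremum is finite, as is the case if `f` dominates the
distance. -/
noncomputable def distConj (f : X → ℝ) (z : X) : ℝ :=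
  ⨆ a, (dist z a - f a)

/-- The average `(f + f*) / 2`, one step of the tightening of `f` to an extremal function. -/
noncomputable def averageConj (f : X → ℝ) (z : X) : ℝ :=
  (f z + distConj f z) / 2

/-- The pointwise limit of the iterates of `averageConj`, which decrease when `f` dominates the
distance: a choice of extremal function below `f` that is natural in `f`. -/
noncomputable def extremalLimit (f : X → ℝ) (z : X) : ℝ :=
  ⨅ n, averageConj^[n] f z

namespace DominatesDist

theorem nonneg (hf : DominatesDist f) (z : X) : 0 ≤ f z := by
  have := hf z z
  rw [dist_self] at this
  linarith

theorem comp_isometry (hf : DominatesDist f) {u : Y → X} (hu : Isometry u) :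
    DominatesDist (f ∘ u) := fun a b => hu.dist_eq a b ▸ hf (u a) (u b)

theorem dist_sub_le (hf : DominatesDist f) (z a : X) : dist z a - f a ≤ f z :=
  sub_le_iff_le_add.2 (hf z a)

theorem dist_sub_le_distConj (hf : DominatesDist f) (z a : X) : dist z a - f a ≤ distConj f z :=
  le_ciSup (f := fun a => dist z a - f a) ⟨f z, Set.forall_mem_range.2 (hf.dist_sub_le z)⟩ a

theorem distConj_le (hf : DominatesDist f) (z : X) : distConj f z ≤ f z :=
  have : Nonempty X := ⟨z⟩
  ciSup_le (hf.dist_sub_le z)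

theorem distConj_le_add (hf : DominatesDist f) (h : ∀ a, f a ≤ g a + c) (z : X) :
    distConj g z ≤ distConj f z + c := by
  have : Nonempty X := ⟨z⟩
  exact ciSup_le fun a => by linarith [hf.dist_sub_le_distConj z a, h a]

theorem averageConj_le (hf : DominatesDist f) (z : X) : averageConj f z ≤ f z := by
  unfold averageConj
  linarith [hf.distConj_le z]

end DominatesDist

theorem dominatesDist_averageConj (hf : DominatesDist f) : DominatesDist (averageConj f) := by
  intro a b
  have hab := hf.dist_sub_le_distConj a b
  have hba := hf.dist_sub_le_distConj b a
  rw [dist_comm] at hba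
  unfold averageConj
  linarith

theorem dominatesDist_iterate_averageConj (hf : DominatesDist f) (n : ℕ) :
    DominatesDist (averageConj^[n] f) :=
  Function.Iterate.rec DominatesDist hf (fun _ h => dominatesDist_averageConj h) n

theorem abs_averageConj_sub_le (hf : DominatesDist f) (hg : DominatesDist g)
    (h : ∀ z, |f z - g z| ≤ c) (z : X) : |averageConj f z - averageConj g z| ≤ c := by
  have hfg (a : X) : f a ≤ g a + c := by linarith [(abs_le.1 (h a)).2]
  have hgf (a : X) : g a ≤ f a + c := by linarith [(abs_le.1 (h a)).1]
  have hconj_fg := hg.distConj_le_add hgf z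
  have hconj_gf := hf.distConj_le_add hfg z
  unfold averageConj
  exact abs_le.2 ⟨by linarith [hgf z], by linarith [hfg z]⟩

theorem averageConj_comp (f : X → ℝ) (u : Y ≃ᵢ X) : averageConj (f ∘ u) = averageConj f ∘ u := by
  ext z
  have hconj : distConj (f ∘ u) z = distConj f (u z) := by
    rw [distConj, distConj, ← u.surjective.iSup_comp fun a => dist (u z) a - f a]
    simp only [u.dist_eq, Function.comp_apply]
  simp only [averageConj, Function.comp_apply, hconj]

theorem iterate_averageConj_comp (f : X → ℝ) (u : Y ≃ᵢ X) (n : ℕ) :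
    averageConj^[n] (f ∘ u) = averageConj^[n] f ∘ u :=
  (Function.Semiconj.iterate_right (f := fun f : X → ℝ => f ∘ u)
    (fun f => (averageConj_comp f u).symm) n f).symm

theorem extremalLimit_comp (f : X → ℝ) (u : Y ≃ᵢ X) (z : Y) :
    extremalLimit (f ∘ u) z = extremalLimit f (u z) := by
  simp only [extremalLimit, iterate_averageConj_comp, Function.comp_apply]

theorem bddBelow_range_iterate_averageConj (hf : DominatesDist f) (z : X) :
    BddBelow (Set.range fun n => averageConj^[n] f z) :=
  ⟨0, Set.forall_mem_range.2 fun n => (dominatesDist_iterate_averageConj hf n).nonneg z⟩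

theorem extremalLimit_le_iterate (hf : DominatesDist f) (n : ℕ) (z : X) :
    extremalLimit f z ≤ averageConj^[n] f z :=
  ciInf_le (bddBelow_range_iterate_averageConj hf z) n

theorem tendsto_iterate_averageConj (hf : DominatesDist f) (z : X) :
    Tendsto (fun n => averageConj^[n] f z) atTop (𝓝 (extremalLimit f z)) := by
  refine tendsto_atTop_ciInf (antitone_nat_of_succ_le fun n => ?_)
    (bddBelow_range_iterate_averageConj hf z)
  rw [Function.iterate_succ_apply']
  exact (dominatesDist_iterate_averageConj hf n).averageConj_le z

theorem dominatesDist_extremalLimit (hf : DominatesDist f) : DominatesDist (extremalLimit f) :=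
  fun a b => ge_of_tendsto'
    ((tendsto_iterate_averageConj hf a).add (tendsto_iterate_averageConj hf b))
    fun n => dominatesDist_iterate_averageConj hf n a b

theorem extremalLimit_le_distConj (hf : DominatesDist f) (z : X) :
    extremalLimit f z ≤ distConj (extremalLimit f) z := by
  have hstep (n : ℕ) : 2 * averageConj^[n + 1] f z - averageConj^[n] f z ≤
      distConj (extremalLimit f) z := by
    have hconj := (dominatesDist_extremalLimit hf).distConj_le_add (c := 0)
      (fun a => by simpa using extremalLimit_le_iterate hf n a) z
    rw [Function.iterate_succ_apply', averageConj]
    linarith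
  have hlim := tendsto_iterate_averageConj hf z
  have htendsto := ((hlim.comp (tendsto_add_atTop_nat 1)).const_mul 2).sub hlim
  linarith [le_of_tendsto' htendsto hstep]

theorem abs_extremalLimit_sub_le (hf : DominatesDist f) (hg : DominatesDist g)
    (h : ∀ z, |f z - g z| ≤ c) (z : X) : |extremalLimit f z - extremalLimit g z| ≤ c := by
  have hiter (n : ℕ) : ∀ z, |averageConj^[n] f z - averageConj^[n] g z| ≤ c := by
    induction n with
    | zero => exact h
    | succ n ih =>
      simp only [Function.iterate_succ_apply']
      exact abs_averageConj_sub_le (dominatesDist_iterate_averageConj hf n)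
        (dominatesDist_iterate_averageConj hg n) ih
  exact le_of_tendsto'
    ((tendsto_iterate_averageConj hf z).sub (tendsto_iterate_averageConj hg z)).abs
    fun n => hiter n z

end TightSpan

section FarthestDist

variable {X : Type*} [PseudoMetricSpace X] {A : Set X} {x : X}

/-- The distance from `z` to the farthest point of `A`. It is only meaningful for nonempty bounded
`A`. -/
noncomputable def farthestDist (A : Set X) (z : X) : ℝ :=
  ⨆ a : A, dist z a

/-- The mean of the distances from `z` to `x` and to the farthest point of `A`. -/
noncomputable def meanFarthestDist (A : Set X) (x z : X) : ℝ :=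
  (dist z x + farthestDist A z) / 2

theorem dist_le_farthestDist (hA : Bornology.IsBounded A) (hx : x ∈ A) (z : X) :
    dist z x ≤ farthestDist A z := by
  have hbdd : BddAbove (Set.range fun a : A => dist z a) := by
    refine ⟨dist z x + Metric.diam A, Set.forall_mem_range.2 fun a => ?_⟩
    linarith [dist_triangle z x a, Metric.dist_le_diam_of_mem hA hx a.2]
  exact le_ciSup hbdd ⟨x, hx⟩

theorem farthestDist_le_dist_add_diam (hA : Bornology.IsBounded A) (hx : x ∈ A) (z : X) :
    farthestDist A z ≤ dist z x + Metric.diam A := by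
  have : Nonempty A := ⟨x, hx⟩
  refine ciSup_le fun a => ?_
  linarith [dist_triangle z x a, Metric.dist_le_diam_of_mem hA hx a.2]

theorem farthestDist_apply_of_image_eq {u : X → X} (hu : Isometry u) (huA : u '' A = A) (z : X) :
    farthestDist A (u z) = farthestDist A z := by
  simp only [farthestDist, ← sSup_image']
  conv_lhs => rw [← huA, Set.image_image]
  simp only [hu.dist_eq]

theorem dominatesDist_meanFarthestDist (hA : Bornology.IsBounded A) (hx : x ∈ A) :
    DominatesDist (meanFarthestDist A x) := by
  intro a b
  unfold meanFarthestDist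
  linarith [dist_triangle_right a b x, dist_le_farthestDist hA hx a,
    dist_le_farthestDist hA hx b]

theorem meanFarthestDist_apply_of_image_eq {u : X → X} (hu : Isometry u) (hux : u x = x)
    (huA : u '' A = A) (z : X) : meanFarthestDist A x (u z) = meanFarthestDist A x z := by
  have hdist : dist (u z) x = dist z x := by rw [← hu.dist_eq z x, hux]
  rw [meanFarthestDist, meanFarthestDist, hdist, farthestDist_apply_of_image_eq hu huA]

theorem meanFarthestDist_le_apply_add (hA : Bornology.IsBounded A) {u : X ≃ᵢ X} (hu : u x ∈ A)
    (hu' : u⁻¹ x ∈ A) (z : X) :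
    meanFarthestDist A x z ≤ meanFarthestDist A x (u z) + Metric.diam A / 2 := by
  have hnear : dist z x ≤ farthestDist A (u z) :=
    u.dist_eq z x ▸ dist_le_farthestDist hA hu (u z)
  have hfar : farthestDist A z ≤ dist (u z) x + Metric.diam A := by
    have hdist : dist (u z) x = dist z (u⁻¹ x) := by
      rw [← u.dist_eq z, u.apply_inv_self]
    exact hdist ▸ farthestDist_le_dist_add_diam hA hu' z
  unfold meanFarthestDist
  linarith

theorem abs_meanFarthestDist_apply_sub_le (hA : Bornology.IsBounded A) {u : X ≃ᵢ X}
    (hu : u x ∈ A) (hu' : u⁻¹ x ∈ A) (z : X) :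
    |meanFarthestDist A x (u z) - meanFarthestDist A x z| ≤ Metric.diam A / 2 := by
  have hle := meanFarthestDist_le_apply_add hA hu hu' z
  have hge := meanFarthestDist_le_apply_add hA hu' (by rwa [inv_inv]) (u z)
  rw [u.inv_apply_self] at hge
  exact abs_le.2 ⟨by linarith, by linarith⟩

end FarthestDist

namespace IsInjectiveSpace

variable {X : Type*} [MetricSpace X] {f : X → ℝ}

theorem exists_eq_dist (hX : IsInjectiveSpace X) (hf : DominatesDist f)
    (hext : ∀ z, f z ≤ distConj f z) : ∃ y, ∀ z, f z = dist z y := by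
  obtain ⟨y, hy⟩ := hX (Set.range fun z => (z, f z)) (by
    rintro _ ⟨a, rfl⟩ _ ⟨b, rfl⟩
    exact hf a b)
  have hle (z : X) : dist z y ≤ f z := hy (z, f z) ⟨z, rfl⟩
  refine ⟨y, fun z => le_antisymm ((hext z).trans ?_) (hle z)⟩
  have : Nonempty X := ⟨z⟩
  exact ciSup_le fun a => by linarith [dist_triangle_right z a y, hle a]

theorem exists_dist_apply_le (hX : IsInjectiveSpace X) (hf : DominatesDist f) :
    ∃ y, ∀ (u : X ≃ᵢ X) (c : ℝ), (∀ z, |f (u z) - f z| ≤ c) → dist (u y) y ≤ c := by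
  obtain ⟨y, hy⟩ :=
    hX.exists_eq_dist (dominatesDist_extremalLimit hf) (extremalLimit_le_distConj hf)
  refine ⟨y, fun u c hu => ?_⟩
  have hshift := abs_extremalLimit_sub_le (hf.comp_isometry u.isometry) hf hu y
  rw [extremalLimit_comp, hy, hy, dist_self, sub_zero] at hshift
  exact (le_abs_self _).trans hshift

theorem exists_fixed_and_edist_apply_le (hX : IsInjectiveSpace X) {A : Set X} {x : X}
    (hx : x ∈ A) :
    ∃ y, (∀ u : X ≃ᵢ X, u x = x → u '' A = A → u y = y) ∧
      ∀ u : X ≃ᵢ X, u x ∈ A → u⁻¹ x ∈ A → edist (u y) y ≤ Metric.ediam A / 2 := by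
  by_cases hA : Bornology.IsBounded A
  · obtain ⟨y, hy⟩ := hX.exists_dist_apply_le (dominatesDist_meanFarthestDist hA hx)
    refine ⟨y, fun u hux huA => dist_le_zero.1 (hy u 0 fun z => ?_), fun u hu hu' => ?_⟩
    · rw [meanFarthestDist_apply_of_image_eq u.isometry hux huA, sub_self, abs_zero]
    · have hdist := hy u _ (abs_meanFarthestDist_apply_sub_le hA hu hu')
      calc edist (u y) y ≤ ENNReal.ofReal (Metric.diam A / 2) := by
            rw [edist_dist]
            exact ENNReal.ofReal_le_ofReal hdist
        _ = Metric.ediam A / 2 := by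
            rw [ENNReal.ofReal_div_of_pos two_pos, Metric.diam,
              ENNReal.ofReal_toReal (Metric.isBounded_iff_ediam_ne_top.1 hA), ENNReal.ofReal_ofNat]
  · have htop : Metric.ediam A = ⊤ := not_not.1 (mt Metric.isBounded_iff_ediam_ne_top.2 hA)
    refine ⟨x, fun u hux _ => hux, fun u _ _ => ?_⟩
    rw [htop, ENNReal.top_div_of_ne_top ENNReal.ofNat_ne_top]
    exact le_top

end IsInjectiveSpace

section AlternatingWords

variable {Γ : Type*} [Group Γ]

/-- The products `g₁ h₁ ⋯ gₖ hₖ g` with `gᵢ, g ∈ G` and `hᵢ ∈ H`. The final factor from `G` makes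
the set symmetric under inversion. -/
def alternatingWords (G H : Subgroup Γ) (k : ℕ) : Set Γ :=
  ((G : Set Γ) * (H : Set Γ)) ^ k * (G : Set Γ)

variable (G H : Subgroup Γ)

theorem alternatingWords_eq (k : ℕ) :
    alternatingWords G H k = (G : Set Γ) * ((H : Set Γ) * (G : Set Γ)) ^ k :=
  mul_pow_mul _ _ k

theorem inv_alternatingWords (k : ℕ) : (alternatingWords G H k)⁻¹ = alternatingWords G H k := by
  conv_rhs => rw [alternatingWords_eq]
  simp only [alternatingWords, mul_inv_rev, ← inv_pow, inv_coe_set]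

theorem mul_alternatingWords (k : ℕ) :
    (G : Set Γ) * alternatingWords G H k = alternatingWords G H k := by
  rw [alternatingWords_eq, ← mul_assoc, coe_mul_coe]

theorem alternatingWords_mul_alternatingWords (j k : ℕ) :
    alternatingWords G H j * alternatingWords G H k = alternatingWords G H (j + k) := by
  rw [alternatingWords, mul_assoc, mul_alternatingWords, alternatingWords, alternatingWords,
    ← mul_assoc, ← pow_add]

variable {G} in
theorem smul_alternatingWords {g : Γ} (hg : g ∈ G) (k : ℕ) :
    g • alternatingWords G H k = alternatingWords G H k := by
  rw [alternatingWords_eq, ← smul_mul_assoc, smul_coe_set hg]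

theorem one_mem_mul_coe : (1 : Γ) ∈ (G : Set Γ) * (H : Set Γ) :=
  ⟨1, G.one_mem, 1, H.one_mem, one_mul 1⟩

theorem one_mem_alternatingWords (k : ℕ) : 1 ∈ alternatingWords G H k :=
  ⟨1, Set.one_mem_pow (one_mem_mul_coe G H), 1, G.one_mem, one_mul 1⟩

theorem alternatingWords_mono : Monotone (alternatingWords G H) := fun _ _ hjk =>
  Set.mul_subset_mul_right (Set.pow_subset_pow_right (one_mem_mul_coe G H) hjk)

theorem pow_subset_alternatingWords (k : ℕ) :
    ((G : Set Γ) * (H : Set Γ)) ^ k ⊆ alternatingWords G H k :=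
  Set.subset_mul_left _ G.one_mem

theorem inv_pow_subset_alternatingWords (k : ℕ) :
    (((G : Set Γ) * (H : Set Γ)) ^ k)⁻¹ ⊆ alternatingWords G H k :=
  inv_alternatingWords G H k ▸ Set.inv_subset_inv.2 (pow_subset_alternatingWords G H k)

theorem inv_pow_mul_pow_subset_alternatingWords (k : ℕ) :
    (((G : Set Γ) * (H : Set Γ)) ^ k)⁻¹ * ((G : Set Γ) * (H : Set Γ)) ^ k ⊆
      alternatingWords G H (2 * k) := by
  rw [two_mul, ← alternatingWords_mul_alternatingWords]
  exact Set.mul_subset_mul (inv_pow_subset_alternatingWords G H k)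
    (pow_subset_alternatingWords G H k)

theorem inv_mul_pow_mul_mul_pow_subset_alternatingWords (k : ℕ) :
    ((H : Set Γ) * ((G : Set Γ) * (H : Set Γ)) ^ k)⁻¹ *
        ((H : Set Γ) * ((G : Set Γ) * (H : Set Γ)) ^ k) ⊆
      alternatingWords G H (2 * k + 1) := by
  set P := ((G : Set Γ) * (H : Set Γ)) ^ k
  calc ((H : Set Γ) * P)⁻¹ * ((H : Set Γ) * P) = P⁻¹ * (H * P) := by
        rw [mul_inv_rev, inv_coe_set, mul_assoc, ← mul_assoc (H : Set Γ), coe_mul_coe]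
    _ ⊆ alternatingWords G H k * (H * alternatingWords G H k) :=
        Set.mul_subset_mul (inv_pow_subset_alternatingWords G H k)
          (Set.mul_subset_mul_left (pow_subset_alternatingWords G H k))
    _ = alternatingWords G H (k + 1 + k) := by
        simp only [alternatingWords, pow_add, pow_one, mul_assoc]
    _ = alternatingWords G H (2 * k + 1) := by rw [add_right_comm, two_mul]

end AlternatingWords

section OrbitSet

variable {X : Type*} [MetricSpace X] {S : Set (X ≃ᵢ X)} {x : X}

theorem apply_mem_orbitSet {u : X ≃ᵢ X} (hu : u ∈ S) (x : X) : u x ∈ orbitSet S x :=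
  Set.mem_image_of_mem _ hu

theorem image_orbitSet (u : X ≃ᵢ X) (S : Set (X ≃ᵢ X)) (x : X) :
    u '' orbitSet S x = orbitSet (u • S) x := by
  simp only [orbitSet, ← Set.image_smul, Set.image_image, smul_eq_mul, IsometryEquiv.mul_apply]

theorem orbitSet_mul_of_mem_fixedSet {G : Subgroup (X ≃ᵢ X)} (hx : x ∈ fixedSet G)
    (S : Set (X ≃ᵢ X)) : orbitSet (S * (G : Set (X ≃ᵢ X))) x = orbitSet S x := by
  refine Set.Subset.antisymm ?_ (Set.image_mono (Set.subset_mul_left S G.one_mem))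
  rintro _ ⟨_, ⟨u, hu, g, hg, rfl⟩, rfl⟩
  exact ⟨u, hu, congrArg u (hx g hg).symm⟩

theorem orbitSet_alternatingWords {G : Subgroup (X ≃ᵢ X)} (H : Subgroup (X ≃ᵢ X)) (k : ℕ)
    (hx : x ∈ fixedSet G) :
    orbitSet (alternatingWords G H k) x =
      orbitSet (((G : Set (X ≃ᵢ X)) * (H : Set (X ≃ᵢ X))) ^ k) x :=
  orbitSet_mul_of_mem_fixedSet hx _

theorem ediam_orbitSet_le {r : ENNReal} (h : ∀ u ∈ S⁻¹ * S, edist (u x) x ≤ r) :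
    Metric.ediam (orbitSet S x) ≤ r := by
  refine Metric.ediam_le ?_
  rintro _ ⟨u, hu, rfl⟩ _ ⟨v, hv, rfl⟩
  calc edist (u x) (v x) = edist ((v⁻¹ * u) x) x := by
        rw [← v.edist_eq _ x, IsometryEquiv.mul_apply, v.apply_inv_self]
    _ ≤ r := h _ (Set.mul_mem_mul (Set.inv_mem_inv.2 hv) hu)

end OrbitSet

theorem diameter_doubles_general {X : Type*} [MetricSpace X] (hX : IsInjectiveSpace X)
    (G H : Subgroup (X ≃ᵢ X)) (m : ℕ) {x : X} (hx : x ∈ fixedSet G) :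
    ∃ y ∈ fixedSet G, ∀ k,
      (2 * k ≤ m →
        Metric.ediam (orbitSet (((G : Set (X ≃ᵢ X)) * (H : Set (X ≃ᵢ X))) ^ k) y) ≤
          Metric.ediam (orbitSet (((G : Set (X ≃ᵢ X)) * (H : Set (X ≃ᵢ X))) ^ m) x) / 2) ∧
      (2 * k + 1 ≤ m →
        Metric.ediam (orbitSet ((H : Set (X ≃ᵢ X)) *
            ((G : Set (X ≃ᵢ X)) * (H : Set (X ≃ᵢ X))) ^ k) y) ≤
          Metric.ediam (orbitSet (((G : Set (X ≃ᵢ X)) * (H : Set (X ≃ᵢ X))) ^ m) x) / 2) := by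
  rw [← orbitSet_alternatingWords H m hx]
  obtain ⟨y, hfix, hmove⟩ :=
    hX.exists_fixed_and_edist_apply_le (apply_mem_orbitSet (one_mem_alternatingWords G H m) x)
  have hdiam {S : Set (X ≃ᵢ X)} (hS : S⁻¹ * S ⊆ alternatingWords G H m) :
      Metric.ediam (orbitSet S y) ≤
        Metric.ediam (orbitSet (alternatingWords G H m) x) / 2 := by
    refine ediam_orbitSet_le fun u hu => hmove u (apply_mem_orbitSet (hS hu) x) ?_
    rw [← inv_alternatingWords]
    exact apply_mem_orbitSet (Set.inv_mem_inv.2 (hS hu)) x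
  refine ⟨y, fun g hg => hfix g (hx g hg) ?_, fun k => ⟨fun hk => hdiam ?_, fun hk => hdiam ?_⟩⟩
  · rw [image_orbitSet, smul_alternatingWords H hg]
  · exact (inv_pow_mul_pow_subset_alternatingWords G H k).trans (alternatingWords_mono G H hk)
  · exact (inv_mul_pow_mul_mul_pow_subset_alternatingWords G H k).trans
      (alternatingWords_mono G H hk)

/-- Halving of orbit diameters for two elliptic isometry groups of an injective
metric space. -/
theorem diameter_doubles {X : Type*} [MetricSpace X] (hX : IsInjectiveSpace X)
    (G H : Subgroup (X ≃ᵢ X))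
    (hG : (fixedSet G).Nonempty) (hH : (fixedSet H).Nonempty)
    (n : ℕ) (x : X) (hx : x ∈ fixedSet G) :
    ∃ y ∈ fixedSet G,
      (n = 0 →
        EMetric.diam (orbitSet (H : Set (X ≃ᵢ X)) y) ≤
          EMetric.diam (orbitSet ((G : Set (X ≃ᵢ X)) * (H : Set (X ≃ᵢ X))) x) / 2) ∧
      (1 ≤ n →
        EMetric.diam (orbitSet (((G : Set (X ≃ᵢ X)) * (H : Set (X ≃ᵢ X))) ^ (2 ^ (n - 1))) y) ≤
          EMetric.diam (orbitSet (((G : Set (X ≃ᵢ X)) * (H : Set (X ≃ᵢ X))) ^ (2 ^ n)) x) / 2) := by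
  obtain ⟨y, hyG, hy⟩ := diameter_doubles_general hX G H (2 ^ n) hx
  refine ⟨y, hyG, ?_, fun hn => (hy _).1 (by rw [← pow_succ', Nat.sub_add_cancel hn])⟩
  rintro rfl
  simpa only [pow_zero, pow_one, mul_one] using! (hy 0).2 le_rfl
end

section
/- Let X be an injective (hyperconvex) metric space, let H be a group of isometries of X, and let y ∈ X be a point whose orbit H · y is bounded. Then there exists a point z ∈ X fixed by every element of H such that d(y, z) ≤ diam(H · y)/2. In particular, X^H ≠ ∅ and 2·d(y, X^H) ≤ diam(H · y). -/
open Pointwise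

/-!
Encode closed balls as pairs (centre, radius). A bounded invariant set `A` gives an invariant family
of pairwise compatible balls, namely those of radius `diam A / 2` about its points. Enlarge such a
family to a maximal one by Zorn's lemma, and let `M` be its intersection, which is invariant, and
nonempty by hyperconvexity. The balls of radius `diam M / 2` about the points of `M` can be adjoined
to the family, so by maximality they already belong to it and therefore contain `M`. Hence
`diam M ≤ diam M / 2`, and `M` is a single point, necessarily fixed.
-/

open MulAction Metric

section BallFamily

variable {G X : Type*} [PseudoMetricSpace X]

/-- The intersection of the closed balls in a family `S`, a ball being encoded as the pair of its
centre and its radius, as in `IsInjectiveSpace`. -/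
def ballInter (S : Set (X × ℝ)) : Set X :=
  {z | ∀ p ∈ S, dist p.1 z ≤ p.2}

theorem isBounded_ballInter {S : Set (X × ℝ)} (hS : S.Nonempty) :
    Bornology.IsBounded (ballInter S) := by
  obtain ⟨p, hp⟩ := hS
  exact isBounded_closedBall.subset fun z hz => mem_closedBall'.2 (hz p hp)

/-- A family of closed balls, encoded as (centre, radius), that satisfies the pairwise condition of
hyperconvexity and is stable under the action of `G` on the centres. The pairwise condition is also
imposed on a ball and itself, so that all radii are nonnegative. -/
structure IsInvariantBallFamily (G : Type*) [SMul G X] (S : Set (X × ℝ)) : Prop where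
  dist_le_add : ∀ p ∈ S, ∀ q ∈ S, dist p.1 q.1 ≤ p.2 + q.2
  smul_mem : ∀ g : G, ∀ p ∈ S, (g • p.1, p.2) ∈ S

namespace IsInvariantBallFamily

section SMul

variable [SMul G X] {S T : Set (X × ℝ)} {A : Set X}

theorem prod_half_diam (hA : Bornology.IsBounded A) (hGA : ∀ g : G, ∀ a ∈ A, g • a ∈ A) :
    IsInvariantBallFamily G (A ×ˢ {diam A / 2}) where
  dist_le_add := by
    rintro ⟨a, _⟩ ⟨ha, rfl⟩ ⟨b, _⟩ ⟨hb, rfl⟩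
    simpa only [add_halves] using dist_le_diam_of_mem hA ha hb
  smul_mem g p hp := ⟨hGA g p.1 hp.1, hp.2⟩

theorem union (hS : IsInvariantBallFamily G S) (hT : IsInvariantBallFamily G T)
    (hST : ∀ p ∈ S, ∀ q ∈ T, dist p.1 q.1 ≤ p.2 + q.2) : IsInvariantBallFamily G (S ∪ T) where
  dist_le_add := by
    rintro p (hp | hp) q (hq | hq)
    · exact hS.dist_le_add p hp q hq
    · exact hST p hp q hq
    · simpa only [dist_comm, add_comm] using hST q hq p hp
    · exact hT.dist_le_add p hp q hq
  smul_mem g p := Or.imp (hS.smul_mem g p) (hT.smul_mem g p)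

theorem sUnion {c : Set (Set (X × ℝ))} (hc : ∀ S ∈ c, IsInvariantBallFamily G S)
    (hchain : IsChain (· ⊆ ·) c) : IsInvariantBallFamily G (⋃₀ c) where
  dist_le_add := by
    rintro p ⟨S, hS, hp⟩ q ⟨T, hT, hq⟩
    obtain hST | hTS := hchain.total hS hT
    · exact (hc T hT).dist_le_add p (hST hp) q hq
    · exact (hc S hS).dist_le_add p hp q (hTS hq)
  smul_mem := by
    rintro g p ⟨S, hS, hp⟩
    exact ⟨S, hS, (hc S hS).smul_mem g p hp⟩

theorem exists_subset_maximal (hS : IsInvariantBallFamily G S) :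
    ∃ T, S ⊆ T ∧ Maximal (IsInvariantBallFamily G) T :=
  zorn_subset_nonempty {T | IsInvariantBallFamily G T}
    (fun c hc hchain _ => ⟨⋃₀ c, sUnion hc hchain, fun _ => Set.subset_sUnion_of_mem⟩) S hS

end SMul

variable [Group G] [MulAction G X] [IsIsometricSMul G X] {S : Set (X × ℝ)}

theorem smul_mem_ballInter (hS : IsInvariantBallFamily G S) (g : G) {z : X}
    (hz : z ∈ ballInter S) : g • z ∈ ballInter S := fun p hp =>
  calc
    dist p.1 (g • z) = dist (g⁻¹ • p.1) z := by rw [← dist_smul g (g⁻¹ • p.1), smul_inv_smul]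
    _ ≤ p.2 := hz _ (hS.smul_mem g⁻¹ p hp)

theorem dist_le_half_diam_of_maximal (hS : Maximal (IsInvariantBallFamily G) S)
    (hne : S.Nonempty) {z w : X} (hz : z ∈ ballInter S) (hw : w ∈ ballInter S) :
    dist z w ≤ diam (ballInter S) / 2 := by
  set M := ballInter S
  have hM : IsInvariantBallFamily G (M ×ˢ {diam M / 2}) :=
    prod_half_diam (isBounded_ballInter hne) fun g _ => hS.prop.smul_mem_ballInter g
  have hSM : IsInvariantBallFamily G (S ∪ M ×ˢ {diam M / 2}) := by
    refine hS.prop.union hM ?_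
    rintro p hp ⟨a, _⟩ ⟨ha, rfl⟩
    exact (ha p hp).trans (le_add_of_nonneg_right (div_nonneg diam_nonneg zero_le_two))
  have hmem : (z, diam M / 2) ∈ S := hS.le_of_ge hSM Set.subset_union_left (Or.inr ⟨hz, rfl⟩)
  exact hw _ hmem

theorem diam_ballInter_eq_zero_of_maximal (hS : Maximal (IsInvariantBallFamily G) S)
    (hne : S.Nonempty) : diam (ballInter S) = 0 := by
  have hle : diam (ballInter S) ≤ diam (ballInter S) / 2 :=
    diam_le_of_forall_dist_le (div_nonneg diam_nonneg zero_le_two)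
      fun _ hz _ hw => dist_le_half_diam_of_maximal hS hne hz hw
  linarith [diam_nonneg (s := ballInter S)]

end IsInvariantBallFamily

end BallFamily

section FixedPoint

variable {G X : Type*} [MetricSpace X] [Group G] [MulAction G X] [IsIsometricSMul G X]

theorem IsInvariantBallFamily.subsingleton_ballInter_of_maximal {S : Set (X × ℝ)}
    (hS : Maximal (IsInvariantBallFamily G) S) (hne : S.Nonempty) :
    (ballInter S).Subsingleton := fun z hz w hw => by
  have hzw := dist_le_half_diam_of_maximal hS hne hz hw
  rwa [diam_ballInter_eq_zero_of_maximal hS hne, zero_div, dist_le_zero] at hzw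

theorem IsInjectiveSpace.exists_mem_fixedPoints_mem_ballInter (hX : IsInjectiveSpace X)
    {S : Set (X × ℝ)} (hS : IsInvariantBallFamily G S) (hne : S.Nonempty) :
    ∃ z ∈ fixedPoints G X, z ∈ ballInter S := by
  obtain ⟨T, hST, hT⟩ := hS.exists_subset_maximal
  obtain ⟨z, hz⟩ : (ballInter T).Nonempty := hX T hT.prop.dist_le_add
  have hsub : (ballInter T).Subsingleton :=
    IsInvariantBallFamily.subsingleton_ballInter_of_maximal hT (hne.mono hST)
  exact ⟨z, fun g => hsub (hT.prop.smul_mem_ballInter g hz) hz, fun p hp => hz p (hST hp)⟩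

theorem bounded_orbit_fixed_point_general (hX : IsInjectiveSpace X) (y : X)
    (hb : Bornology.IsBounded (orbit G y)) :
    ∃ z ∈ fixedPoints G X, dist y z ≤ diam (orbit G y) / 2 ∧
      2 * infDist y (fixedPoints G X) ≤ diam (orbit G y) := by
  have hfam : IsInvariantBallFamily G (orbit G y ×ˢ {diam (orbit G y) / 2}) :=
    .prod_half_diam hb fun g _ => mem_orbit_of_mem_orbit g
  have hy : (y, diam (orbit G y) / 2) ∈ orbit G y ×ˢ {diam (orbit G y) / 2} :=
    ⟨mem_orbit_self y, rfl⟩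
  obtain ⟨z, hfix, hz⟩ := hX.exists_mem_fixedPoints_mem_ballInter hfam ⟨_, hy⟩
  have hyz : dist y z ≤ diam (orbit G y) / 2 := hz _ hy
  refine ⟨z, hfix, hyz, ?_⟩
  linarith [infDist_le_dist_of_mem (x := y) hfix]

end FixedPoint

section IsometryGroup

variable {X : Type*} [MetricSpace X]

/-- The tautological action of the isometry group of `X`. -/
instance isometryEquivMulAction : MulAction (X ≃ᵢ X) X where
  smul f x := f x
  one_smul _ := rfl
  mul_smul _ _ _ := rfl

instance isIsometricSMul_subgroup_isometryEquiv (H : Subgroup (X ≃ᵢ X)) : IsIsometricSMul H X :=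
  ⟨fun f => f.1.isometry⟩

theorem fixedSet_eq_fixedPoints (H : Subgroup (X ≃ᵢ X)) : fixedSet H = fixedPoints H X :=
  Set.ext fun x => (Subtype.forall (p := (· ∈ H)) (q := fun g => g • x = x)).symm

theorem orbitSet_eq_orbit (H : Subgroup (X ≃ᵢ X)) (y : X) :
    orbitSet (H : Set (X ≃ᵢ X)) y = orbit H y :=
  Set.image_eq_range _ _

end IsometryGroup

/-- A bounded orbit of a group of isometries of an injective metric space yields
a fixed point at distance at most half the orbit diameter. -/
theorem bounded_orbit_fixed_point {X : Type*} [MetricSpace X]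
    (hX : IsInjectiveSpace X) (H : Subgroup (X ≃ᵢ X)) (y : X)
    (hb : Bornology.IsBounded (orbitSet (H : Set (X ≃ᵢ X)) y)) :
    ∃ z ∈ fixedSet H,
      dist y z ≤ Metric.diam (orbitSet (H : Set (X ≃ᵢ X)) y) / 2 ∧
      2 * Metric.infDist y (fixedSet H) ≤
        Metric.diam (orbitSet (H : Set (X ≃ᵢ X)) y) := by
  rw [orbitSet_eq_orbit] at hb ⊢
  simpa only [fixedSet_eq_fixedPoints] using bounded_orbit_fixed_point_general hX y hb
end

section
/- Let X be the 1-skeleton of an 18-systolic complex, i.e., a bridged graph with no induced cycles of length ℓ for 4 ≤ ℓ ≤ 17, and let G act strongly rigidly on X by graph automorphisms. If g ∈ G with g ≠ 1 fixes some vertex of X, then Fix(g) consists of exactly one vertex. -/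
open SimpleGraph Pointwise

/-- A bridged graph: a connected simple graph with no isometric cycles of length
at least 4 (equivalently, every isometric cycle is a triangle). A cycle of length
`n` is encoded as a map `ZMod n → V` sending consecutive elements to adjacent
vertices; it is isometric if the graph distance between any two of its vertices
equals the distance along the cycle. -/
def IsBridged {V : Type*} (Γ : SimpleGraph V) : Prop :=
  Γ.Connected ∧
  ∀ n : ℕ, 4 ≤ n →
    ¬ ∃ f : ZMod n → V,
      (∀ i : ZMod n, Γ.Adj (f i) (f (i + 1))) ∧
      (∀ i j : ZMod n, Γ.dist (f i) (f j) = min (i - j).val (j - i).val)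

/-- `Γ` has no induced cycles of length `ℓ` for `a ≤ ℓ ≤ b`. -/
def NoInducedCycles {V : Type*} (Γ : SimpleGraph V) (a b : ℕ) : Prop :=
  ∀ n : ℕ, a ≤ n → n ≤ b →
    ¬ ∃ f : ZMod n → V,
      Function.Injective f ∧
      (∀ i j : ZMod n, Γ.Adj (f i) (f j) ↔ (j = i + 1 ∨ i = j + 1))

/-- The 1-skeleton of an 18-systolic complex: a bridged graph with no induced
cycles of length `ℓ` for `4 ≤ ℓ ≤ 17`. -/
def IsEighteenSystolic {V : Type*} (Γ : SimpleGraph V) : Prop :=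
  IsBridged Γ ∧ NoInducedCycles Γ 4 17

/-- `G` acts strongly rigidly on `Γ` if the only element stabilizing a (possibly
infinite) clique with at least two vertices is the identity. -/
def StronglyRigid {V : Type*} (Γ : SimpleGraph V) (G : Type*) [Group G]
    [MulAction G V] : Prop :=
  ∀ g : G,
    (∃ s : Set V, Γ.IsClique s ∧ (∃ a ∈ s, ∃ b ∈ s, a ≠ b) ∧ g • s = s) → g = 1

/-! In a bridged graph the neighbours of `v` lying on geodesics from `u` to `v` form a clique, and
an edge equidistant from `u` has a common neighbour closer to `u`. Both statements are proved
together by induction on the perimeter of the geodesic bigon or triangle involved: two geodesics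
from `u` which end at the same vertex or at adjacent vertices close up to a cycle, which is not
isometric, and a shortcut between them cuts it into configurations of smaller perimeter.

If `g` fixes two distinct vertices `u` and `v`, it therefore stabilizes the clique consisting of `v`
and its neighbours on geodesics from `u` to `v`, so `g = 1` by strong rigidity. -/

section

variable {V : Type*} {Γ : SimpleGraph V} {P : ℕ} {a b c d e o p q u v x y z : V}

/-- The neighbours of `v` that are one step closer to `u`, i.e. the neighbours of `v` in the
interval `I(u, v)`. -/
def intervalNeighborSet (Γ : SimpleGraph V) (u v : V) : Set V :=
  {x | Γ.Adj v x ∧ Γ.dist u x + 1 = Γ.dist u v}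

/-- The interval neighbourhood condition (the neighbours of `v` in `I(u, v)` form a clique) and the
triangle condition (an edge equidistant from `u` has a common neighbour closer to `u`), restricted
to instances in which the geodesic bigon, resp. triangle, has perimeter at most `P`. -/
structure IntervalConditions (Γ : SimpleGraph V) (P : ℕ) : Prop where
  inc : ∀ ⦃u v : V⦄, 2 * Γ.dist u v ≤ P → Γ.IsClique (intervalNeighborSet Γ u v)
  tc : ∀ ⦃u x y : V⦄, Γ.Adj x y → Γ.dist u x = Γ.dist u y → 2 * Γ.dist u x + 1 ≤ P →
    (intervalNeighborSet Γ u x ∩ intervalNeighborSet Γ u y).Nonempty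

/-- The vertices `α 0, …, α n` form a geodesic; the values of `α` beyond `n` are irrelevant. -/
def IsGeodesic (Γ : SimpleGraph V) (α : ℕ → V) (n : ℕ) : Prop :=
  ∀ ⦃i j : ℕ⦄, i ≤ j → j ≤ n → Γ.dist (α i) (α j) = j - i

lemma dist_le_one_of_isClique {s : Set V} (hs : Γ.IsClique s) (hx : x ∈ s) (hy : y ∈ s) :
    Γ.dist x y ≤ 1 := by
  rcases eq_or_ne x y with rfl | hne
  · simp
  · exact (dist_eq_one_iff_adj.2 (hs hx hy hne)).le

lemma adj_of_dist_le_one (hc : Γ.Connected) (hne : x ≠ y) (h : Γ.dist x y ≤ 1) : Γ.Adj x y := by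
  by_contra hadj
  exact h.not_gt (hc.one_lt_dist_of_ne_of_not_adj hne hadj)

lemma dist_eq_two_of_adj_of_adj (hxy : Γ.Adj x y) (hyz : Γ.Adj y z) (hxz : 1 < Γ.dist x z) :
    Γ.dist x z = 2 := by
  have hz := hyz.diff_dist_adj (u := x)
  rw [dist_eq_one_iff_adj.2 hxy] at hz
  omega

lemma intervalNeighborSet_nonempty (hc : Γ.Connected) (hne : u ≠ v) :
    (intervalNeighborSet Γ u v).Nonempty := by
  obtain ⟨w, hw⟩ := hc.exists_walk_length_eq_dist v u
  cases w with
  | nil => exact absurd rfl hne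
  | @cons _ z _ hvz w =>
    refine ⟨z, hvz, ?_⟩
    have hz := dist_le w
    have hv := hvz.diff_dist_adj (u := u)
    rw [Walk.length_cons] at hw
    rw [Γ.dist_comm] at hz hw
    omega

lemma intervalNeighborSet_subset (hc : Γ.Connected) (h : Γ.dist a p + Γ.dist p v = Γ.dist a v) :
    intervalNeighborSet Γ p v ⊆ intervalNeighborSet Γ a v := by
  rintro x ⟨hvx, hx⟩
  refine ⟨hvx, ?_⟩
  have hax := hc.dist_triangle (u := a) (v := p) (w := x)
  have hv := hvx.diff_dist_adj (u := a)
  omega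

lemma isGeodesic_getVert (w : Γ.Walk u v) (hw : w.length = Γ.dist u v) :
    IsGeodesic Γ w.getVert w.length := by
  intro i j hij hj
  have hsub : ((w.drop i).take (j - i)).IsSubwalk w :=
    ((w.drop i).isSubwalk_take _).trans (w.isSubwalk_drop _)
  have hlen := length_eq_dist_of_subwalk hw hsub
  rw [Walk.take_length, Walk.drop_length, Walk.drop_getVert, Nat.add_sub_cancel' hij] at hlen
  omega

lemma exists_isGeodesic (hc : Γ.Connected) (u v : V) :
    ∃ α : ℕ → V, IsGeodesic Γ α (Γ.dist u v) ∧ α 0 = u ∧ α (Γ.dist u v) = v := by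
  obtain ⟨w, hw⟩ := hc.exists_walk_length_eq_dist u v
  exact ⟨w.getVert, hw ▸ isGeodesic_getVert w hw, w.getVert_zero, hw ▸ w.getVert_length⟩

lemma exists_isGeodesic_of_mem_intervalNeighborSet (hc : Γ.Connected)
    (hx : x ∈ intervalNeighborSet Γ u v) :
    ∃ α : ℕ → V, IsGeodesic Γ α (Γ.dist u v) ∧ α 0 = u ∧ α (Γ.dist u v) = v ∧
      α (Γ.dist u v - 1) = x := by
  obtain ⟨w, hw⟩ := hc.exists_walk_length_eq_dist u x
  have hlen : (w.concat hx.1.symm).length = Γ.dist u v := by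
    rw [Walk.length_concat, hw, hx.2]
  rw [← hlen]
  exact ⟨_, isGeodesic_getVert _ hlen, Walk.getVert_zero _, Walk.getVert_length _,
    Walk.penultimate_concat w hx.1.symm⟩

lemma min_val_sub_val_sub {n : ℕ} [NeZero n] {i j : ZMod n} (h : i.val ≤ j.val) :
    min (i - j).val (j - i).val = min (j.val - i.val) (n - (j.val - i.val)) := by
  rw [← neg_sub j i, ZMod.neg_val, ← ZMod.val_sub h, min_comm]
  split_ifs with hij <;> simp [hij]

namespace IsBridged

lemma not_isometric_cycle (hb : IsBridged Γ) {n : ℕ} (hn : 4 ≤ n) (f : ℕ → V)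
    (hf : ∀ i j, i ≤ j → j < n → Γ.dist (f i) (f j) = min (j - i) (n - (j - i))) : False := by
  have : NeZero n := ⟨by omega⟩
  have : Fact (1 < n) := ⟨by omega⟩
  have hdist (i j : ZMod n) : Γ.dist (f i.val) (f j.val) = min (i - j).val (j - i).val := by
    wlog h : i.val ≤ j.val generalizing i j
    · rw [Γ.dist_comm, min_comm]
      exact this j i (by omega)
    rw [min_val_sub_val_sub h, hf _ _ h j.val_lt]
  refine hb.2 n hn ⟨fun i ↦ f i.val, fun i ↦ ?_, hdist⟩
  rw [← dist_eq_one_iff_adj, hdist, sub_add_cancel_left, add_sub_cancel_left, ZMod.neg_val,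
    if_neg one_ne_zero, ZMod.val_one]
  omega

lemma dist_le_one_of_square (hb : IsBridged Γ) (hab : Γ.Adj a b) (hbc : Γ.Adj b c)
    (hcd : Γ.Adj c d) (hda : Γ.Adj d a) : Γ.dist a c ≤ 1 ∨ Γ.dist b d ≤ 1 := by
  by_contra! h
  have hac := dist_eq_two_of_adj_of_adj hab hbc h.1
  have hbd := dist_eq_two_of_adj_of_adj hbc hcd h.2
  refine hb.not_isometric_cycle le_rfl (fun i ↦ [a, b, c, d].getD i a) fun i j hij hj ↦ ?_
  interval_cases j <;> interval_cases i <;> simp [*, hda.symm]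

lemma dist_le_one_of_pentagon (hb : IsBridged Γ) (hab : Γ.Adj a b) (hbc : Γ.Adj b c)
    (hcd : Γ.Adj c d) (hde : Γ.Adj d e) (hea : Γ.Adj e a) :
    Γ.dist a c ≤ 1 ∨ Γ.dist b d ≤ 1 ∨ Γ.dist c e ≤ 1 ∨ Γ.dist d a ≤ 1 ∨ Γ.dist e b ≤ 1 := by
  by_contra! h
  have hac := dist_eq_two_of_adj_of_adj hab hbc h.1
  have hbd := dist_eq_two_of_adj_of_adj hbc hcd h.2.1
  have hce := dist_eq_two_of_adj_of_adj hcd hde h.2.2.1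
  have had := Γ.dist_comm.trans (dist_eq_two_of_adj_of_adj hde hea h.2.2.2.1)
  have hbe := Γ.dist_comm.trans (dist_eq_two_of_adj_of_adj hea hab h.2.2.2.2)
  refine hb.not_isometric_cycle (show 4 ≤ 5 by norm_num) (fun i ↦ [a, b, c, d, e].getD i a)
    fun i j hij hj ↦ ?_
  interval_cases j <;> interval_cases i <;> simp [*, hea.symm]

lemma exists_shortcut (hb : IsBridged Γ) {n : ℕ} {α β : ℕ → V} (hα : IsGeodesic Γ α n)
    (hβ : IsGeodesic Γ β n) (h0 : α 0 = β 0) (hle : Γ.dist (α n) (β n) ≤ 1)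
    (hn : 4 ≤ 2 * n + Γ.dist (α n) (β n)) :
    ∃ i ≤ n, ∃ j ≤ n, Γ.dist (α i) (β j) < i + j ∧
      Γ.dist (α i) (β j) + i + j < 2 * n + Γ.dist (α n) (β n) := by
  by_contra! h
  set L := 2 * n + Γ.dist (α n) (β n)
  refine hb.not_isometric_cycle hn (fun k ↦ if k ≤ n then α k else β (L - k)) fun i j hij hj ↦ ?_
  rcases le_or_gt j n with hjn | hjn
  · simp only [if_pos hjn, if_pos (hij.trans hjn), hα hij hjn]
    omega
  rcases le_or_gt i n with hin | hin
  · simp only [if_pos hin, if_neg hjn.not_ge]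
    have hshort := h i hin (L - j) (by omega)
    have hvia0 := hb.1.dist_triangle (u := α i) (v := α 0) (w := β (L - j))
    have hvian := hb.1.dist_triangle (u := α i) (v := α n) (w := β (L - j))
    have hlast := hb.1.dist_triangle (u := α n) (v := β n) (w := β (L - j))
    have hαn := hα hin le_rfl
    have hβn := hβ (show L - j ≤ n by omega) le_rfl
    rw [Γ.dist_comm (u := α i) (v := α 0), hα (Nat.zero_le i) hin, h0,
      hβ (Nat.zero_le _) (by omega)] at hvia0
    rw [Γ.dist_comm] at hβn
    omega
  · simp only [if_neg hin.not_ge, if_neg hjn.not_ge]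
    rw [Γ.dist_comm, hβ (by omega) (by omega)]
    omega

end IsBridged

namespace IntervalConditions

lemma exists_closer_to_both (hc : Γ.Connected) (h : IntervalConditions Γ P)
    (hlt : Γ.dist u q < Γ.dist u p) (hP : Γ.dist u p + Γ.dist u q + Γ.dist q p ≤ P) :
    (intervalNeighborSet Γ u p ∩ intervalNeighborSet Γ q p).Nonempty := by
  induction hd : Γ.dist q p generalizing p with
  | zero =>
    rw [hc.dist_eq_zero_iff.1 hd] at hlt
    exact absurd hlt (lt_irrefl _)
  | succ d ih =>
    obtain ⟨z, hpz, hqz⟩ := intervalNeighborSet_nonempty hc (show q ≠ p by rintro rfl; omega)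
    have huz := hpz.diff_dist_adj (u := u)
    rcases lt_trichotomy (Γ.dist u z) (Γ.dist u p) with hlow | hlevel | hhigh
    · exact ⟨z, ⟨hpz, by omega⟩, hpz, hqz⟩
    · obtain ⟨w, ⟨hzw, huw⟩, -, hqw⟩ := ih (p := z) (by omega) (by omega) (by omega)
      have huqz := hc.dist_triangle (u := u) (v := q) (w := z)
      obtain ⟨t, htp, htz⟩ := h.tc hpz hlevel.symm (by omega)
      have htw := dist_le_one_of_isClique (h.inc (by omega)) htz ⟨hzw, huw⟩
      have hqt := hc.dist_triangle (u := q) (v := w) (w := t)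
      have hqp := htp.1.diff_dist_adj (u := q)
      rw [Γ.dist_comm] at htw
      exact ⟨t, htp, htp.1, by omega⟩
    · obtain ⟨w, hw, -, hqw⟩ := ih (p := z) (by omega) (by omega) (by omega)
      have huqz := hc.dist_triangle (u := u) (v := q) (w := z)
      have hwp := dist_le_one_of_isClique (h.inc (by omega)) hw ⟨hpz.symm, by omega⟩
      have hqp := hc.dist_triangle (u := q) (v := w) (w := p)
      omega

lemma exists_closer_of_mem_interval (hc : Γ.Connected) (h : IntervalConditions Γ P)
    (hlt : Γ.dist u q < Γ.dist u p) (hpx : Γ.dist u p + Γ.dist p x = Γ.dist u x)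
    (hP : Γ.dist u p + Γ.dist u q + Γ.dist p q ≤ P) :
    ∃ z, Γ.dist u z + 1 = Γ.dist u p ∧ Γ.dist z q + 1 = Γ.dist p q ∧
      Γ.dist u z + Γ.dist z x = Γ.dist u x ∧
      intervalNeighborSet Γ p x ⊆ intervalNeighborSet Γ z x := by
  obtain ⟨z, ⟨hpz, huz⟩, -, hqz⟩ :=
    h.exists_closer_to_both hc hlt (by rwa [Γ.dist_comm (u := q)])
  have huzx := hc.dist_triangle (u := u) (v := z) (w := x)
  have hzpx := hc.dist_triangle (u := z) (v := p) (w := x)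
  have hzp := dist_eq_one_iff_adj.2 hpz.symm
  refine ⟨z, huz, ?_, by omega, intervalNeighborSet_subset hc (by omega)⟩
  rwa [Γ.dist_comm, Γ.dist_comm (u := p)]

lemma dist_le_of_mem_interval (hc : Γ.Connected) (h : IntervalConditions Γ P) {k : ℕ}
    (hp : Γ.dist o p ≤ k) (hq : Γ.dist o q ≤ k) (hz : Γ.dist p z + Γ.dist q z = Γ.dist p q)
    (hP : Γ.dist o p + Γ.dist o q + Γ.dist p q ≤ P) : Γ.dist o z ≤ k := by
  by_contra! hlt
  have hop := hc.dist_triangle (u := o) (v := p) (w := z)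
  have hoq := hc.dist_triangle (u := o) (v := q) (w := z)
  obtain ⟨a, hoa, -, hpa⟩ := h.exists_closer_to_both hc (u := o) (q := p) (p := z)
    (by omega) (by omega)
  obtain ⟨b, hob, -, hqb⟩ := h.exists_closer_to_both hc (u := o) (q := q) (p := z)
    (by omega) (by omega)
  have hab := dist_le_one_of_isClique (h.inc (by omega)) hoa hob
  have hpb := hc.dist_triangle (u := p) (v := a) (w := b)
  have hpq := hc.dist_triangle (u := p) (v := b) (w := q)
  rw [Γ.dist_comm (u := b)] at hpq
  omega

lemma exists_adj_between (hc : Γ.Connected) (h : IntervalConditions Γ P) (hne : p ≠ q) :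
    ∃ z, Γ.Adj p z ∧ Γ.dist z q + 1 = Γ.dist p q ∧ ∀ ⦃o k⦄, Γ.dist p o ≤ k → Γ.dist q o ≤ k →
      Γ.dist p o + Γ.dist q o + Γ.dist p q ≤ P → Γ.dist z o ≤ k := by
  obtain ⟨z, hpz, hqz⟩ := intervalNeighborSet_nonempty hc hne.symm
  have hpz1 := dist_eq_one_iff_adj.2 hpz
  rw [Γ.dist_comm, Γ.dist_comm (u := q)] at hqz
  refine ⟨z, hpz, hqz, fun o k hp hq hP ↦ ?_⟩
  rw [Γ.dist_comm (v := o)] at hp hq hP ⊢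
  rw [Γ.dist_comm (u := q)] at hP
  exact h.dist_le_of_mem_interval hc hp hq (by rw [Γ.dist_comm (u := q)]; omega) hP

lemma dist_le_one_trans_of_mem (hb : IsBridged Γ) (h : IntervalConditions Γ P)
    (huv : 2 * Γ.dist u v ≤ P + 1) (ha_mem : a ∈ intervalNeighborSet Γ u v)
    (hb_mem : b ∈ intervalNeighborSet Γ u v) (hc_mem : c ∈ intervalNeighborSet Γ u v)
    (hab : Γ.dist a b ≤ 1) (hbc : Γ.dist b c ≤ 1) : Γ.dist a c ≤ 1 := by
  have hc := hb.1
  obtain ⟨hva, hua⟩ := ha_mem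
  obtain ⟨hvb, hub⟩ := hb_mem
  obtain ⟨hvc, huc⟩ := hc_mem
  rcases eq_or_ne a b with rfl | hne_ab
  · exact hbc
  rcases eq_or_ne b c with rfl | hne_bc
  · exact hab
  by_contra! hac
  have far {s : V} (hs : Γ.dist u s + 2 = Γ.dist u v) : 1 < Γ.dist v s := by
    have := hc.dist_triangle (u := u) (v := s) (w := v)
    rw [Γ.dist_comm (u := s)] at this
    omega
  have no_square {s : V} (hs : Γ.dist u s + 2 = Γ.dist u v) (has : Γ.Adj a s)
      (hsc : Γ.Adj s c) : False :=
    (hb.dist_le_one_of_square hva has hsc hvc.symm).elim (far hs).not_ge hac.not_ge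
  obtain ⟨s, ⟨has, hus⟩, hbs⟩ :=
    h.tc (u := u) (adj_of_dist_le_one hc hne_ab hab) (by omega) (by omega)
  obtain ⟨t, hbt, ⟨hct, hut⟩⟩ :=
    h.tc (u := u) (adj_of_dist_le_one hc hne_bc hbc) (by omega) (by omega)
  rcases eq_or_ne s t with rfl | hne_st
  · exact no_square (by omega) has hct.symm
  have hst := adj_of_dist_le_one hc hne_st (dist_le_one_of_isClique (h.inc (by omega)) hbs hbt)
  rcases hb.dist_le_one_of_pentagon hva has hst hct.symm hvc.symm with hvs | hat | hsc | htv | hca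
  · exact (far (by omega)).not_ge hvs
  · exact no_square (by omega) (adj_of_dist_le_one hc (by rintro rfl; omega) hat) hct.symm
  · exact no_square (by omega) has (adj_of_dist_le_one hc (by rintro rfl; omega) hsc)
  · exact (far (by omega)).not_ge (Γ.dist_comm.trans_le htv)
  · exact hac.not_ge (Γ.dist_comm.trans_le hca)

lemma exists_mem_dist_le_one (hc : Γ.Connected) (h : IntervalConditions Γ P) (hpz : Γ.Adj p z)
    (hvz : Γ.dist p v = Γ.dist z v) (hP : 2 * Γ.dist p v + 1 ≤ P)
    (hx : x ∈ intervalNeighborSet Γ p v) : ∃ y ∈ intervalNeighborSet Γ z v, Γ.dist x y ≤ 1 := by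
  obtain ⟨w, ⟨hpw, hvw⟩, ⟨hzw, -⟩⟩ :=
    h.tc (u := v) hpz (by rwa [Γ.dist_comm, Γ.dist_comm (u := v)]) (by rwa [Γ.dist_comm])
  rw [← dist_eq_one_iff_adj] at hpw hzw
  rw [Γ.dist_comm, Γ.dist_comm (u := v)] at hvw
  rcases eq_or_ne w v with rfl | hwv
  · have hxp : x = p := by
      rw [eq_comm, ← hc.dist_eq_zero_iff]
      have := hx.2
      omega
    rw [hxp]
    exact ⟨z, ⟨dist_eq_one_iff_adj.1 (Γ.dist_comm.trans hzw), by simp [hzw]⟩,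
      (dist_eq_one_iff_adj.2 hpz).le⟩
  · obtain ⟨y, hy⟩ := intervalNeighborSet_nonempty hc hwv
    have hyp := intervalNeighborSet_subset hc (a := p) (by omega) hy
    exact ⟨y, intervalNeighborSet_subset hc (by omega) hy,
      dist_le_one_of_isClique (h.inc (by omega)) hx hyp⟩

lemma dist_le_one_of_shortcut (hb : IsBridged Γ) (h : IntervalConditions Γ P)
    (huv : 2 * Γ.dist u v ≤ P + 1) (hp : Γ.dist u p + Γ.dist p v = Γ.dist u v)
    (hq : Γ.dist u q + Γ.dist q v = Γ.dist u v) (hPu : Γ.dist u p + Γ.dist u q + Γ.dist p q ≤ P)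
    (hPv : Γ.dist p v + Γ.dist q v + Γ.dist p q ≤ P) (hx : x ∈ intervalNeighborSet Γ p v)
    (hy : y ∈ intervalNeighborSet Γ q v) : Γ.dist x y ≤ 1 := by
  have hc := hb.1
  induction hd : Γ.dist p q using Nat.strong_induction_on generalizing p q x y with
  | _ d ih =>
  wlog hle : Γ.dist u q ≤ Γ.dist u p generalizing p q x y
  · rw [Γ.dist_comm (u := p) (v := q)] at hPu hPv hd
    rw [Γ.dist_comm]
    exact this hq hp (by omega) (by omega) hy hx hd (by omega)
  rcases hle.lt_or_eq with hlt | heq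
  · obtain ⟨z, huz, hzq, hz, hsub⟩ := h.exists_closer_of_mem_interval hc hlt hp hPu
    exact ih _ (by omega) hz hq (by omega) (by omega) (hsub hx) hy rfl
  rcases eq_or_ne p q with rfl | hne
  · exact dist_le_one_of_isClique (h.inc (by omega)) hx hy
  obtain ⟨z, hpz, hzq, hz⟩ := h.exists_adj_between hc hne
  have huz := hz (o := u) (k := Γ.dist u p) (by rw [Γ.dist_comm]) (by rw [Γ.dist_comm, heq])
    (by rwa [Γ.dist_comm (v := u), Γ.dist_comm (u := q) (v := u)])
  have hvz := hz (o := v) (k := Γ.dist p v) le_rfl (by omega) hPv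
  have huzv := hc.dist_triangle (u := u) (v := z) (w := v)
  rw [Γ.dist_comm] at huz
  obtain ⟨w, hw, hxw⟩ := h.exists_mem_dist_le_one hc hpz (show Γ.dist p v = Γ.dist z v by omega)
    (by omega) hx
  have hwy := ih _ (by omega) (by omega) hq (by omega) (by omega) hw hy rfl
  exact h.dist_le_one_trans_of_mem hb huv (intervalNeighborSet_subset hc hp hx)
    (intervalNeighborSet_subset hc (by omega) hw) (intervalNeighborSet_subset hc hq hy) hxw hwy

lemma isClique_intervalNeighborSet (hb : IsBridged Γ) (h : IntervalConditions Γ P)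
    (huv : 2 * Γ.dist u v ≤ P + 1) : Γ.IsClique (intervalNeighborSet Γ u v) := by
  intro x hx y hy hne
  have hc := hb.1
  obtain ⟨α, hα, hα0, hαn, hαx⟩ := exists_isGeodesic_of_mem_intervalNeighborSet hc hx
  obtain ⟨β, hβ, hβ0, hβn, hβy⟩ := exists_isGeodesic_of_mem_intervalNeighborSet hc hy
  have hn : 2 ≤ Γ.dist u v := by
    by_contra! hlt
    have hux := hc.dist_eq_zero_iff.1 (show Γ.dist u x = 0 by have := hx.2; omega)
    have huy := hc.dist_eq_zero_iff.1 (show Γ.dist u y = 0 by have := hy.2; omega)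
    exact hne (hux.symm.trans huy)
  obtain ⟨i, hin, j, hjn, hlt, hP⟩ := hb.exists_shortcut hα hβ (hα0.trans hβ0.symm)
    (by simp [hαn, hβn]) (by omega)
  have hui := hα0 ▸ hα (Nat.zero_le i) hin
  have huj := hβ0 ▸ hβ (Nat.zero_le j) hjn
  have hiv := hαn ▸ hα hin le_rfl
  have hjv := hβn ▸ hβ hjn le_rfl
  rw [hαn, hβn, Γ.dist_self] at hP
  have hij := hc.dist_triangle (u := α i) (v := β j) (w := v)
  have hji := hc.dist_triangle (u := β j) (v := α i) (w := v)
  rw [Γ.dist_comm (u := β j) (v := α i)] at hji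
  have hix := hα (show i ≤ Γ.dist u v - 1 by omega) (Nat.sub_le _ _)
  have hjy := hβ (show j ≤ Γ.dist u v - 1 by omega) (Nat.sub_le _ _)
  rw [hαx] at hix
  rw [hβy] at hjy
  exact adj_of_dist_le_one hc hne <| h.dist_le_one_of_shortcut hb huv (p := α i) (q := β j)
    (by omega) (by omega) (by omega) (by omega) ⟨hx.1, by omega⟩ ⟨hy.1, by omega⟩

lemma nonempty_inter_of_mem_interval (hc : Γ.Connected) (h : IntervalConditions Γ P)
    (hxy : Γ.Adj x y) (hux : Γ.dist u x = Γ.dist u y) (hP : 2 * Γ.dist u x ≤ P)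
    (hup : 1 ≤ Γ.dist u p) (hpx : Γ.dist u p + Γ.dist p x = Γ.dist u x)
    (hpy : Γ.dist u p + Γ.dist p y = Γ.dist u y) :
    (intervalNeighborSet Γ u x ∩ intervalNeighborSet Γ u y).Nonempty :=
  (h.tc hxy (by omega) (by omega)).mono <|
    Set.inter_subset_inter (intervalNeighborSet_subset hc hpx) (intervalNeighborSet_subset hc hpy)

lemma nonempty_inter_of_adj (hc : Γ.Connected) (h : IntervalConditions Γ P)
    (hxy : Γ.Adj x y) (hux : Γ.dist u x = Γ.dist u y) (hP : 2 * Γ.dist u x ≤ P)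
    (hpz : Γ.Adj p z) (hup : 1 ≤ Γ.dist u p) (huz : Γ.dist u z = Γ.dist u p) (hne : p ≠ x)
    (hpx : Γ.dist u p + Γ.dist p x = Γ.dist u x) (hzx : Γ.dist z x = Γ.dist p x + 1)
    (hzy : Γ.dist u z + Γ.dist z y = Γ.dist u y) :
    (intervalNeighborSet Γ u x ∩ intervalNeighborSet Γ u y).Nonempty := by
  obtain ⟨w, hw⟩ := intervalNeighborSet_nonempty hc hne
  have hwz := intervalNeighborSet_subset hc (a := z)
    (by rw [dist_eq_one_iff_adj.2 hpz.symm]; omega) hw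
  have hwu := intervalNeighborSet_subset hc hpx hw
  have hwy := dist_le_one_of_isClique (h.inc (by omega)) hwz ⟨hxy, by omega⟩
  have hne : w ≠ y := by
    rintro rfl
    have := hwu.2
    omega
  exact ⟨w, hwu, (adj_of_dist_le_one hc hne hwy).symm, hwu.2.trans hux⟩

lemma nonempty_inter_trans (hb : IsBridged Γ) (h : IntervalConditions Γ P)
    (hP : 2 * Γ.dist u a ≤ P) (hxy : Γ.Adj x y)
    (hux : (intervalNeighborSet Γ u x ∩ intervalNeighborSet Γ u a).Nonempty)
    (huy : (intervalNeighborSet Γ u a ∩ intervalNeighborSet Γ u y).Nonempty) :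
    (intervalNeighborSet Γ u x ∩ intervalNeighborSet Γ u y).Nonempty := by
  have hc := hb.1
  obtain ⟨b, ⟨hxb, hub⟩, hab⟩ := hux
  obtain ⟨c, hac, ⟨hyc, huc⟩⟩ := huy
  have hbc := dist_le_one_of_isClique (h.inc hP) hab hac
  have hub' := hab.2
  have huc' := hac.2
  rcases eq_or_ne b c with rfl | hne
  · exact ⟨b, ⟨hxb, hub⟩, hyc, huc⟩
  rcases hb.dist_le_one_of_square hxb (adj_of_dist_le_one hc hne hbc) hyc.symm hxy.symm
    with hxc | hby
  · exact ⟨c, ⟨adj_of_dist_le_one hc (by rintro rfl; omega) hxc, by omega⟩, hyc, huc⟩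
  · exact ⟨b, ⟨hxb, hub⟩, (adj_of_dist_le_one hc (by rintro rfl; omega) hby).symm, by omega⟩

lemma nonempty_inter_or_exists_adj (hc : Γ.Connected) (h : IntervalConditions Γ P)
    (hxy : Γ.Adj x y) (hux : Γ.dist u x = Γ.dist u y) (hzx : Γ.dist z x = Γ.dist z y)
    (hP : 2 * Γ.dist z x + 1 ≤ P) (huz : Γ.dist u z + Γ.dist z x = Γ.dist u x + 1) :
    (intervalNeighborSet Γ u x ∩ intervalNeighborSet Γ u y).Nonempty ∨
      ∃ w, Γ.Adj x w ∧ Γ.Adj w y ∧ Γ.dist u w = Γ.dist u x ∧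
        Γ.dist u z + Γ.dist z w = Γ.dist u w := by
  obtain ⟨w, ⟨hxw, hzw⟩, ⟨hyw, -⟩⟩ := h.tc hxy hzx hP
  have huw := hc.dist_triangle (u := u) (v := z) (w := w)
  have hxw' := hxw.diff_dist_adj (u := u)
  rcases (show Γ.dist u w ≤ Γ.dist u x by omega).eq_or_lt with hw | hw
  · exact .inr ⟨w, hxw, hyw.symm, hw, by omega⟩
  · exact .inl ⟨w, ⟨hxw, by omega⟩, hyw, by omega⟩

lemma nonempty_inter_of_shortcut (hb : IsBridged Γ) (h : IntervalConditions Γ P)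
    (hxy : Γ.Adj x y) (hux : Γ.dist u x = Γ.dist u y) (hP : 2 * Γ.dist u x ≤ P)
    (hpx : Γ.dist u p + Γ.dist p x = Γ.dist u x) (hqy : Γ.dist u q + Γ.dist q y = Γ.dist u y)
    (hlt : Γ.dist p q < Γ.dist u p + Γ.dist u q)
    (hPu : Γ.dist u p + Γ.dist u q + Γ.dist p q ≤ 2 * Γ.dist u x) :
    (intervalNeighborSet Γ u x ∩ intervalNeighborSet Γ u y).Nonempty := by
  have hc := hb.1
  induction hd : Γ.dist p q using Nat.strong_induction_on generalizing p q x y with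
  | _ d ih =>
  wlog hle : Γ.dist u q ≤ Γ.dist u p generalizing p q x y
  · rw [Γ.dist_comm (u := p) (v := q)] at hlt hPu hd
    rw [Set.inter_comm]
    exact this hxy.symm hux.symm (by omega) hqy hpx (by omega) (by omega) hd (by omega)
  rcases hle.lt_or_eq with hlt' | heq
  · obtain ⟨z, huz, hzq, hz, -⟩ := h.exists_closer_of_mem_interval hc hlt' hpx (by omega)
    exact ih _ (by omega) hxy hux hP hz hqy (by omega) (by omega) rfl
  rcases eq_or_ne p q with rfl | hne
  · exact h.nonempty_inter_of_mem_interval hc hxy hux hP (by omega) hpx hqy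
  obtain ⟨z, hpz, hzq, hz⟩ := h.exists_adj_between hc hne
  have huz := hz (o := u) (k := Γ.dist u p) (by rw [Γ.dist_comm]) (by rw [Γ.dist_comm, heq])
    (by rw [Γ.dist_comm (v := u), Γ.dist_comm (u := q) (v := u)]; omega)
  rw [Γ.dist_comm] at huz
  have hpz1 := dist_eq_one_iff_adj.2 hpz
  have huzx := hc.dist_triangle (u := u) (v := z) (w := x)
  have hzpx := hc.dist_triangle (u := z) (v := p) (w := x)
  rw [dist_eq_one_iff_adj.2 hpz.symm] at hzpx
  -- If `z` lies on no geodesic from `u` to `x` or to `y`, a common neighbour `w` of `x` and `y`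
  -- splits `(p, q; x, y)` into the smaller problems `(p, z; x, w)` and `(z, q; w, y)`.
  by_cases hzx : Γ.dist u z + Γ.dist z x = Γ.dist u x
  · have huzp := hc.dist_triangle (u := u) (v := z) (w := p)
    rw [dist_eq_one_iff_adj.2 hpz.symm] at huzp
    exact ih _ (by omega) hxy hux hP hzx hqy (by omega) (by omega) rfl
  by_cases hzy : Γ.dist u z + Γ.dist z y = Γ.dist u y
  · exact h.nonempty_inter_of_adj hc hxy hux hP hpz (by omega) (by omega) (by rintro rfl; omega)
      hpx (by omega) hzy
  have hzq_pos := hc.pos_dist_of_ne (show z ≠ q by rintro rfl; exact hzy hqy)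
  have hpxy := hc.dist_triangle (u := p) (v := x) (w := y)
  rw [dist_eq_one_iff_adj.2 hxy] at hpxy
  have hzy_le := hz (o := y) (k := Γ.dist p x + 1) hpxy (by omega) (by omega)
  have huzy := hc.dist_triangle (u := u) (v := z) (w := y)
  obtain hxy_inter | ⟨w, hxw, hwy, huw, hzw⟩ :=
    h.nonempty_inter_or_exists_adj hc hxy hux (z := z) (by omega) (by omega) (by omega)
  · exact hxy_inter
  · exact h.nonempty_inter_trans hb (a := w) (by omega) hxy
      (ih 1 (by omega) hxw huw.symm hP hpx hzw (by omega) (by omega) hpz1)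
      (ih _ (by omega) hwy (by omega) (by omega) hzw hqy (by omega) (by omega) rfl)

lemma nonempty_inter_intervalNeighborSet (hb : IsBridged Γ) (h : IntervalConditions Γ P)
    (hxy : Γ.Adj x y) (hux : Γ.dist u x = Γ.dist u y) (hP : 2 * Γ.dist u x ≤ P) :
    (intervalNeighborSet Γ u x ∩ intervalNeighborSet Γ u y).Nonempty := by
  have hc := hb.1
  have hxy1 := dist_eq_one_iff_adj.2 hxy
  have hx_pos : Γ.dist u x ≠ 0 := fun hx ↦
    hxy.ne ((hc.dist_eq_zero_iff.1 hx).symm.trans (hc.dist_eq_zero_iff.1 (hux.symm.trans hx)))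
  rcases eq_or_ne (Γ.dist u x) 1 with hx1 | hx1
  · have hy1 := hux.symm.trans hx1
    exact ⟨u, ⟨(dist_eq_one_iff_adj.1 hx1).symm, by simp [hx1]⟩,
      (dist_eq_one_iff_adj.1 hy1).symm, by simp [hy1]⟩
  obtain ⟨α, hα, hα0, hαn⟩ := exists_isGeodesic hc u x
  obtain ⟨β, hβ, hβ0, hβn⟩ := exists_isGeodesic hc u y
  rw [← hux] at hβ hβn
  obtain ⟨i, hin, j, hjn, hlt, hij⟩ := hb.exists_shortcut hα hβ (hα0.trans hβ0.symm)
    (by rw [hαn, hβn, hxy1]) (by omega)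
  have hui := hα0 ▸ hα (Nat.zero_le i) hin
  have huj := hβ0 ▸ hβ (Nat.zero_le j) hjn
  have hix := hαn ▸ hα hin le_rfl
  have hjy := hβn ▸ hβ hjn le_rfl
  rw [hαn, hβn, hxy1] at hij
  exact h.nonempty_inter_of_shortcut hb hxy hux hP (p := α i) (q := β j)
    (by omega) (by omega) (by omega) (by omega)

end IntervalConditions

lemma IsBridged.intervalConditions (hb : IsBridged Γ) (P : ℕ) : IntervalConditions Γ P := by
  induction P with
  | zero => exact ⟨fun _ _ _ _ hx ↦ absurd hx.2 (by omega), fun _ _ _ _ _ _ ↦ by omega⟩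
  | succ P ih =>
    exact ⟨fun _ _ ↦ ih.isClique_intervalNeighborSet hb,
      fun _ _ _ hxy hux hP ↦ ih.nonempty_inter_intervalNeighborSet hb hxy hux (by omega)⟩

lemma dist_map_le {W : Type*} {Γ' : SimpleGraph W} (f : Γ →g Γ') (h : Γ.Reachable u v) :
    Γ'.dist (f u) (f v) ≤ Γ.dist u v := by
  obtain ⟨w, hw⟩ := h.exists_walk_length_eq_dist
  rw [← hw, ← w.length_map f]
  exact dist_le _

section Action

variable {G : Type*} [Group G] [MulAction G V]

lemma dist_smul_smul (hc : Γ.Connected)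
    (hact : ∀ (g : G) (u v : V), Γ.Adj (g • u) (g • v) ↔ Γ.Adj u v) (g : G) (u v : V) :
    Γ.dist (g • u) (g • v) = Γ.dist u v := by
  have hle (g : G) (u v : V) : Γ.dist (g • u) (g • v) ≤ Γ.dist u v :=
    dist_map_le ⟨(g • ·), (hact g _ _).2⟩ (hc u v)
  exact (hle g u v).antisymm (by simpa using hle g⁻¹ (g • u) (g • v))

lemma smul_intervalNeighborSet (hc : Γ.Connected)
    (hact : ∀ (g : G) (u v : V), Γ.Adj (g • u) (g • v) ↔ Γ.Adj u v) (g : G) (u v : V) :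
    g • intervalNeighborSet Γ u v = intervalNeighborSet Γ (g • u) (g • v) := by
  ext x
  obtain ⟨x, rfl⟩ := MulAction.surjective g x
  simp [intervalNeighborSet, Set.smul_mem_smul_set_iff, hact, dist_smul_smul hc hact]

end Action

lemma IsBridged.isClique_insert_intervalNeighborSet (hb : IsBridged Γ) (u v : V) :
    Γ.IsClique (insert v (intervalNeighborSet Γ u v)) :=
  ((hb.intervalConditions _).inc le_rfl).insert fun _ hx _ ↦ hx.1

end

theorem fix_unique_vertex_general {V : Type*} (Γ : SimpleGraph V) (hb : IsBridged Γ)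
    (G : Type*) [Group G] [MulAction G V]
    (hact : ∀ (g : G) (u v : V), Γ.Adj (g • u) (g • v) ↔ Γ.Adj u v)
    (hsr : StronglyRigid Γ G) (g : G) (hg : g ≠ 1) (v : V) (hv : g • v = v) :
    ∀ u : V, g • u = u ↔ u = v := by
  intro u
  refine ⟨fun hu ↦ ?_, fun huv ↦ huv ▸ hv⟩
  by_contra hne
  obtain ⟨x, hx⟩ := intervalNeighborSet_nonempty hb.1 hne
  have hstab : g • insert v (intervalNeighborSet Γ u v) = insert v (intervalNeighborSet Γ u v) := by
    rw [Set.smul_set_insert, smul_intervalNeighborSet hb.1 hact, hu, hv]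
  exact hg <| hsr g ⟨_, hb.isClique_insert_intervalNeighborSet u v,
    ⟨v, Set.mem_insert _ _, x, Set.mem_insert_of_mem _ hx, hx.1.ne⟩, hstab⟩

/-- In a strongly rigid action on (the 1-skeleton of) an 18-systolic complex, a
nontrivial element fixing a vertex has exactly one fixed vertex. -/
theorem fix_unique_vertex {V : Type*} (Γ : SimpleGraph V)
    (h18 : IsEighteenSystolic Γ) (G : Type*) [Group G] [MulAction G V]
    (hact : ∀ (g : G) (u v : V), Γ.Adj (g • u) (g • v) ↔ Γ.Adj u v)
    (hsr : StronglyRigid Γ G)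
    (g : G) (hg : g ≠ 1) (v : V) (hv : g • v = v) :
    ∀ u : V, g • u = u ↔ u = v :=
  fix_unique_vertex_general Γ h18.1 G hact hsr g hg v hv
end

section
/- Let X be the 1-skeleton of an 18-systolic complex, i.e., a bridged graph with no induced cycles of length ℓ for 4 ≤ ℓ ≤ 17, and let G be a finitely generated group acting strongly rigidly on X by graph automorphisms such that every element of G has bounded orbits on the vertices of X (the action is locally elliptic). Then G has a bounded orbit on the vertices of X (the action is elliptic). -/
open SimpleGraph Pointwise

/-!
The distance to a convex set in the 1-skeleton of a 7-systolic complex is a height function for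
which the lower neighbours of a vertex form a clique and adjacent vertices of the same level have a
common lower neighbour. As there are no induced cycles of length 4, 5 or 6, descending paths that
start at adjacent vertices stay adjacent, and two vertices whose distance is much smaller than the
sum of their heights have descending paths that meet. For the distance to a vertex this makes the
graph hyperbolic.

A nontrivial element `h` with a bounded orbit preserves the convex intersection of the balls of some
radius around the points of that orbit. By strong rigidity `h` or `h ^ 2` moves a vertex at height
`n` by at least `2 * n - 8`, since otherwise descending from the vertex and its translates would
lead to a clique stabilized by `h`. If the orbit of `x` were unbounded, then some `g • x` would be
so far from `x` that such an element moving `x` little and a conjugate moving `g • x` little have,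
by hyperbolicity, a product with unbounded orbits.
-/

/-- The 1-skeleton of a 7-systolic complex. Induced cycles of length 4 and 5 are isometric, so a
bridged graph has none and only length 6 has to be excluded. -/
structure IsSevenSystolic {V : Type*} (Γ : SimpleGraph V) : Prop where
  isBridged : IsBridged Γ
  noInducedCycles : NoInducedCycles Γ 6 6

/-- The reflexive closure of adjacency: vertices lying in a common simplex of dimension at most
one. -/
def AdjOrEq {V : Type*} (Γ : SimpleGraph V) (u v : V) : Prop :=
  u = v ∨ Γ.Adj u v

section Basic

variable {V : Type*} {Γ : SimpleGraph V}

@[refl]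
theorem AdjOrEq.refl (u : V) : AdjOrEq Γ u u :=
  Or.inl rfl

@[symm]
theorem AdjOrEq.symm {u v : V} (h : AdjOrEq Γ u v) : AdjOrEq Γ v u :=
  Or.imp Eq.symm SimpleGraph.Adj.symm h

theorem AdjOrEq.adj {u v : V} (h : AdjOrEq Γ u v) (hne : u ≠ v) : Γ.Adj u v :=
  h.resolve_left hne

theorem AdjOrEq.dist_le_one {u v : V} (h : AdjOrEq Γ u v) : Γ.dist u v ≤ 1 := by
  rcases h with rfl | h
  · simp
  · exact (dist_eq_one_iff_adj.2 h).le

theorem AdjOrEq.of_dist_le_one (hc : Γ.Connected) {u v : V} (h : Γ.dist u v ≤ 1) :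
    AdjOrEq Γ u v := by
  by_contra hcon
  have := hc.one_lt_dist_of_ne_of_not_adj (not_or.1 hcon).1 (not_or.1 hcon).2
  omega

theorem AdjOrEq.of_isClique {s : Set V} (hs : Γ.IsClique s) {u v : V} (hu : u ∈ s) (hv : v ∈ s) :
    AdjOrEq Γ u v :=
  or_iff_not_imp_left.2 fun hne => hs hu hv hne

theorem dist_eq_two_of_not_adj (hc : Γ.Connected) {u v w : V} (hne : u ≠ w) (hadj : ¬ Γ.Adj u w)
    (huv : Γ.Adj u v) (hvw : Γ.Adj v w) : Γ.dist u w = 2 := by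
  have h1 := hc.one_lt_dist_of_ne_of_not_adj hne hadj
  have h2 := hc.dist_triangle (u := u) (v := v) (w := w)
  rw [dist_eq_one_iff_adj.2 huv, dist_eq_one_iff_adj.2 hvw] at h2
  omega

theorem exists_adj_dist_eq (hc : Γ.Connected) {u v : V} {k : ℕ} (h : Γ.dist u v = k + 1) :
    ∃ w, Γ.Adj u w ∧ Γ.dist w v = k := by
  obtain ⟨p, hp⟩ := hc.exists_walk_length_eq_dist u v
  cases p with
  | nil => simp at h
  | @cons _ w _ hadj q =>
    have hq := dist_le q
    have htri := hc.dist_triangle (u := u) (v := w) (w := v)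
    rw [dist_eq_one_iff_adj.2 hadj] at htri
    rw [Walk.length_cons] at hp
    exact ⟨w, hadj, by omega⟩

theorem dist_getVert_getVert_le {u v : V} (p : Γ.Walk u v) {i j : ℕ} (hij : i ≤ j) :
    Γ.dist (p.getVert i) (p.getVert j) ≤ j - i := by
  have h := dist_le ((p.drop i).take (j - i))
  rw [Walk.take_length] at h
  simpa only [Walk.drop_getVert, Nat.add_sub_cancel' hij] using h.trans (min_le_left _ _)

theorem dist_getVert_getVert_le_min (hc : Γ.Connected) {o : V} (c : Γ.Walk o o) {i j : ℕ}
    (hij : i ≤ j) (hj : j ≤ c.length) :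
    Γ.dist (c.getVert i) (c.getVert j) ≤ min (j - i) (c.length - (j - i)) := by
  refine le_min (dist_getVert_getVert_le c hij) ?_
  have hi := dist_getVert_getVert_le c (Nat.zero_le i)
  have hj' := dist_getVert_getVert_le c hj
  rw [Walk.getVert_zero, dist_comm] at hi
  rw [Walk.getVert_length, dist_comm] at hj'
  have := hc.dist_triangle (u := c.getVert i) (v := o) (w := c.getVert j)
  omega

end Basic

section ShortCycles

variable {V : Type*} {Γ : SimpleGraph V}

theorem IsBridged.exists_dist_getVert_lt (hB : IsBridged Γ) {o : V} (c : Γ.Walk o o)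
    (hc : 4 ≤ c.length) :
    ∃ i j, i < j ∧ j < c.length ∧
      Γ.dist (c.getVert i) (c.getVert j) < min (j - i) (c.length - (j - i)) := by
  by_contra! hcon
  have hdist {i j : ℕ} (hij : i < j) (hj : j < c.length) :
      Γ.dist (c.getVert i) (c.getVert j) = min (j - i) (c.length - (j - i)) :=
    (dist_getVert_getVert_le_min hB.1 c hij.le hj.le).antisymm (hcon i j hij hj)
  have : Fact (1 < c.length) := ⟨by omega⟩
  have : NeZero c.length := ⟨by omega⟩
  have hlt (i j : ZMod c.length) (hij : i.val < j.val) :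
      Γ.dist (c.getVert i.val) (c.getVert j.val) = min (i - j).val (j - i).val := by
    have hji : (j - i).val = j.val - i.val := ZMod.val_sub hij.le
    have hne : j - i ≠ 0 := fun h => by
      rw [h, ZMod.val_zero] at hji
      omega
    rw [← neg_sub j i, ZMod.neg_val, if_neg hne, hji, min_comm]
    exact hdist hij j.val_lt
  refine hB.2 c.length hc ⟨fun i => c.getVert i.val, fun i => ?_, fun i j => ?_⟩
  · have hval : c.getVert (i + 1).val = c.getVert (i.val + 1) := by
      rcases (Nat.succ_le_of_lt i.val_lt).lt_or_eq with h | h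
      · rw [ZMod.val_add_of_lt (by rwa [ZMod.val_one]), ZMod.val_one]
      · rw [Nat.succ_eq_add_one] at h
        rw [ZMod.val_add, ZMod.val_one, h, Nat.mod_self, Walk.getVert_zero, Walk.getVert_length]
    simp only [hval]
    exact c.adj_getVert_succ i.val_lt
  · rcases lt_trichotomy i.val j.val with h | h | h
    · exact hlt i j h
    · simp [ZMod.val_injective _ h]
    · rw [SimpleGraph.dist_comm, min_comm]
      exact hlt j i h

theorem IsBridged.adj_or_adj_of_four_cycle (hB : IsBridged Γ) {a b c d : V} (hab : Γ.Adj a b)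
    (hbc : Γ.Adj b c) (hcd : Γ.Adj c d) (hda : Γ.Adj d a) (hac : a ≠ c) (hbd : b ≠ d) :
    Γ.Adj a c ∨ Γ.Adj b d := by
  by_contra! hcon
  have hac2 := dist_eq_two_of_not_adj hB.1 hac hcon.1 hab hbc
  have hbd2 := dist_eq_two_of_not_adj hB.1 hbd hcon.2 hbc hcd
  obtain ⟨i, j, hij, hj, h⟩ :=
    hB.exists_dist_getVert_lt (.cons hab (.cons hbc (.cons hcd (.cons hda .nil)))) (by simp)
  simp only [Walk.length_cons, Walk.length_nil] at hj h
  interval_cases j <;> interval_cases i <;>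
    simp [hac2, hbd2, dist_eq_one_iff_adj.2, hab, hbc, hcd, hda.symm] at h

theorem IsBridged.false_of_five_cycle (hB : IsBridged Γ) {a b c d e : V} (hab : Γ.Adj a b)
    (hbc : Γ.Adj b c) (hcd : Γ.Adj c d) (hde : Γ.Adj d e) (hea : Γ.Adj e a) (hac : ¬ Γ.Adj a c)
    (had : ¬ Γ.Adj a d) (hbd : ¬ Γ.Adj b d) (hbe : ¬ Γ.Adj b e) (hce : ¬ Γ.Adj c e) : False := by
  have hac2 := dist_eq_two_of_not_adj hB.1 (by rintro rfl; exact had hcd) hac hab hbc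
  have had2 := dist_eq_two_of_not_adj hB.1 (by rintro rfl; exact hac hcd.symm) had hea.symm hde.symm
  have hbd2 := dist_eq_two_of_not_adj hB.1 (by rintro rfl; exact hbe hde) hbd hbc hcd
  have hbe2 := dist_eq_two_of_not_adj hB.1 (by rintro rfl; exact hbd hde.symm) hbe hab.symm hea.symm
  have hce2 := dist_eq_two_of_not_adj hB.1 (by rintro rfl; exact hac hea.symm) hce hcd hde
  obtain ⟨i, j, hij, hj, h⟩ := hB.exists_dist_getVert_lt
    (.cons hab (.cons hbc (.cons hcd (.cons hde (.cons hea .nil))))) (by simp)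
  simp only [Walk.length_cons, Walk.length_nil] at hj h
  interval_cases j <;> interval_cases i <;>
    simp [hac2, had2, hbd2, hbe2, hce2, dist_eq_one_iff_adj.2, hab, hbc, hcd, hde, hea.symm] at h

theorem IsSevenSystolic.false_of_six_cycle (hΓ : IsSevenSystolic Γ) {a b c d e f : V}
    (hab : Γ.Adj a b) (hbc : Γ.Adj b c) (hcd : Γ.Adj c d) (hde : Γ.Adj d e) (hef : Γ.Adj e f)
    (hfa : Γ.Adj f a) (hac : ¬ Γ.Adj a c) (had : ¬ Γ.Adj a d) (hae : ¬ Γ.Adj a e)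
    (hbd : ¬ Γ.Adj b d) (hbe : ¬ Γ.Adj b e) (hbf : ¬ Γ.Adj b f) (hce : ¬ Γ.Adj c e)
    (hcf : ¬ Γ.Adj c f) (hdf : ¬ Γ.Adj d f) : False := by
  have hadj : ∀ i j : Fin 6, Γ.Adj (![a, b, c, d, e, f] i) (![a, b, c, d, e, f] j) ↔
      j = i + 1 ∨ i = j + 1 := by
    intro i j
    fin_cases i <;> fin_cases j <;>
      simp [*, hfa.symm, SimpleGraph.adj_comm]
  have hsep : ∀ i j : Fin 6, (∀ k, (k = i + 1 ∨ i = k + 1) ↔ (k = j + 1 ∨ j = k + 1)) → i = j := by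
    decide
  have hinj : Function.Injective ![a, b, c, d, e, f] := fun i j hij =>
    hsep i j fun k => by rw [← hadj, ← hadj, hij]
  exact hΓ.noInducedCycles 6 le_rfl le_rfl ⟨![a, b, c, d, e, f], hinj, hadj⟩

end ShortCycles

section Height

variable {V : Type*} {Γ : SimpleGraph V} {l : V → ℕ}

/-- The neighbours of `v` one level below `v`, with respect to the level function `l`. For
`l = Γ.dist o` these are the first steps of the geodesics from `v` to `o`. -/
def lowerNeighborSet (Γ : SimpleGraph V) (l : V → ℕ) (v : V) : Set V :=
  {w | Γ.Adj v w ∧ l w + 1 = l v}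

/-- A level function that behaves like a distance to its zero set: it is 1-Lipschitz, and every
vertex of positive level has a lower neighbour. -/
structure IsHeight (Γ : SimpleGraph V) (l : V → ℕ) : Prop where
  connected : Γ.Connected
  le_add_one : ∀ {u v}, Γ.Adj u v → l u ≤ l v + 1
  nonempty_lowerNeighborSet : ∀ {v}, 0 < l v → (lowerNeighborSet Γ l v).Nonempty

/-- `z` lies below `u`: some geodesic from `u` to `z` descends at every step. -/
def IsBelow (Γ : SimpleGraph V) (l : V → ℕ) (z u : V) : Prop :=
  l u = l z + Γ.dist u z

theorem IsHeight.le_add_dist (hl : IsHeight Γ l) (u v : V) : l u ≤ l v + Γ.dist u v := by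
  induction h : Γ.dist u v generalizing u with
  | zero => simp [hl.connected.dist_eq_zero_iff.1 h]
  | succ k ih =>
    obtain ⟨w, huw, hw⟩ := exists_adj_dist_eq hl.connected h
    have := ih w hw
    have := hl.le_add_one huw
    omega

theorem IsHeight.not_adj (hl : IsHeight Γ l) {u v : V} (h : l u + 2 ≤ l v) : ¬ Γ.Adj u v :=
  fun huv => by
    have := hl.le_add_one huv.symm
    omega

theorem IsHeight.not_adj' (hl : IsHeight Γ l) {u v : V} (h : l v + 2 ≤ l u) : ¬ Γ.Adj u v :=
  fun huv => hl.not_adj h huv.symm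

theorem IsHeight.mem_lowerNeighborSet_of_lt (hl : IsHeight Γ l) {u v : V} (huv : Γ.Adj u v)
    (h : l v < l u) : v ∈ lowerNeighborSet Γ l u :=
  ⟨huv, by have := hl.le_add_one huv; omega⟩

theorem isHeight_dist (hc : Γ.Connected) (o : V) : IsHeight Γ (Γ.dist o) where
  connected := hc
  le_add_one {u v} huv := by
    have := hc.dist_triangle (u := o) (v := v) (w := u)
    rwa [dist_eq_one_iff_adj.2 huv.symm] at this
  nonempty_lowerNeighborSet {v} hv := by
    rw [SimpleGraph.dist_comm] at hv
    obtain ⟨k, hk⟩ := Nat.exists_eq_add_of_lt hv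
    rw [zero_add] at hk
    obtain ⟨w, hvw, hw⟩ := exists_adj_dist_eq hc hk
    exact ⟨w, hvw, by rw [SimpleGraph.dist_comm, hw, SimpleGraph.dist_comm, hk]⟩

theorem IsBelow.refl (u : V) : IsBelow Γ l u u := by
  simp [IsBelow]

theorem isBelow_of_mem_lowerNeighborSet {u w : V} (h : w ∈ lowerNeighborSet Γ l u) :
    IsBelow Γ l w u := by
  rw [IsBelow, dist_eq_one_iff_adj.2 h.1, h.2]

theorem IsBelow.trans (hl : IsHeight Γ l) {w z u : V} (hwz : IsBelow Γ l w z)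
    (hzu : IsBelow Γ l z u) : IsBelow Γ l w u := by
  have := hl.le_add_dist u w
  have := hl.connected.dist_triangle (u := u) (v := z) (w := w)
  unfold IsBelow at *
  omega

theorem IsHeight.exists_isBelow (hl : IsHeight Γ l) {u : V} {j : ℕ} (hj : j ≤ l u) :
    ∃ z, IsBelow Γ l z u ∧ l z = j := by
  induction hj using Nat.decreasingInduction with
  | self => exact ⟨u, IsBelow.refl u, rfl⟩
  | of_succ j _ ih =>
    obtain ⟨z, hzu, hz⟩ := ih
    obtain ⟨w, hw⟩ := hl.nonempty_lowerNeighborSet (v := z) (by omega)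
    exact ⟨w, (isBelow_of_mem_lowerNeighborSet hw).trans hl hzu, by have := hw.2; omega⟩

theorem IsBelow.exists_mem_lowerNeighborSet (hl : IsHeight Γ l) {z u : V} (h : IsBelow Γ l z u)
    (hlt : l z < l u) : ∃ w ∈ lowerNeighborSet Γ l u, IsBelow Γ l z w := by
  unfold IsBelow at h
  obtain ⟨w, huw, hw⟩ := exists_adj_dist_eq hl.connected (u := u) (v := z)
    (k := Γ.dist u z - 1) (by omega)
  have := hl.le_add_dist w z
  have := hl.le_add_one huw
  refine ⟨w, ⟨huw, by omega⟩, ?_⟩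
  unfold IsBelow
  omega

end Height

section BridgedHeight

variable {V : Type*} {Γ : SimpleGraph V} {l : V → ℕ} {M : ℕ}

/-- A height that behaves below level `M / 2` like the distance to a vertex of a bridged graph:
lower neighbours of a vertex are pairwise adjacent, and adjacent vertices of the same positive level
have a common lower neighbour. Odd thresholds include one more level of the first property than of
the second, so that both can be established alternately by induction on `M`. -/
structure IsBridgedHeightUpTo (Γ : SimpleGraph V) (l : V → ℕ) (M : ℕ) : Prop
    extends IsHeight Γ l where
  isClique : ∀ {v}, 2 * l v < M → Γ.IsClique (lowerNeighborSet Γ l v)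
  nonempty_inter : ∀ {v w}, 2 * l v + 1 < M → Γ.Adj v w → l v = l w → 0 < l v →
    (lowerNeighborSet Γ l v ∩ lowerNeighborSet Γ l w).Nonempty

theorem IsBridgedHeightUpTo.adjOrEq (hl : IsBridgedHeightUpTo Γ l M) {v w w' : V}
    (hv : 2 * l v < M) (hw : w ∈ lowerNeighborSet Γ l v) (hw' : w' ∈ lowerNeighborSet Γ l v) :
    AdjOrEq Γ w w' :=
  .of_isClique (hl.isClique hv) hw hw'

/-- Otherwise `b`, `v`, `w`, `b'` close up to an induced 5-cycle or 6-cycle through one or two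
vertices two levels below `v`. -/
theorem IsBridgedHeightUpTo.adjOrEq_of_adj (hl : IsBridgedHeightUpTo Γ l M)
    (hΓ : IsSevenSystolic Γ) {v w b b' : V} (hvw : Γ.Adj v w) (heq : l v = l w) (h2 : 2 ≤ l v)
    (hM : 2 * l v + 1 < M) (hb : b ∈ lowerNeighborSet Γ l v) (hb' : b' ∈ lowerNeighborSet Γ l w) :
    AdjOrEq Γ b b' := by
  by_contra hcon
  have hbb' : ¬ Γ.Adj b b' := fun h => hcon (.inr h)
  obtain ⟨s, hsv, hsw⟩ := hl.nonempty_inter hM hvw heq (by omega)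
  have hlb := hb.2
  have hlb' := hb'.2
  have hls := hsv.2
  have hwb : ¬ Γ.Adj w b := fun h => hcon (hl.adjOrEq (by omega) ⟨h, by omega⟩ hb')
  have hvb' : ¬ Γ.Adj v b' := fun h => hcon (hl.adjOrEq (by omega) hb ⟨h, by omega⟩)
  have hbs : Γ.Adj b s := (hl.adjOrEq (by omega) hb hsv).adj (by rintro rfl; exact hwb hsw.1)
  have hsb' : Γ.Adj s b' := (hl.adjOrEq (by omega) hsw hb').adj (by rintro rfl; exact hvb' hsv.1)
  obtain ⟨r, hrb, hrs⟩ := hl.nonempty_inter (by omega) hbs (by omega) (by omega)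
  obtain ⟨r', hrs', hrb'⟩ := hl.nonempty_inter (by omega) hsb' (by omega) (by omega)
  have hlr := hrb.2
  have hlr' := hrb'.2
  have hfive {t : V} (htb : Γ.Adj b t) (htb' : Γ.Adj b' t) (ht : l t + 1 = l b) : False :=
    hΓ.isBridged.false_of_five_cycle hvw hb'.1 htb' htb.symm hb.1.symm hvb'
      (hl.not_adj' (by omega)) (hl.not_adj' (by omega)) hwb (fun h => hbb' h.symm)
  have hb'r : ¬ Γ.Adj b' r := fun h => hfive hrb.1 h hlr
  have hbr' : ¬ Γ.Adj b r' := fun h => hfive h hrb'.1 (by omega)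
  have hrr' : Γ.Adj r r' :=
    (hl.adjOrEq (by omega) hrs hrs').adj (by rintro rfl; exact hbr' hrb.1)
  exact hΓ.false_of_six_cycle hvw hb'.1 hrb'.1 hrr'.symm hrb.1.symm hb.1.symm hvb'
    (hl.not_adj' (by omega)) (hl.not_adj' (by omega)) (hl.not_adj' (by omega))
    (hl.not_adj' (by omega)) hwb hb'r (fun h => hbb' h.symm) (fun h => hbr' h.symm)

theorem IsBridgedHeightUpTo.adjOrEq_of_isBelow (hl : IsBridgedHeightUpTo Γ l M)
    (hΓ : IsSevenSystolic Γ) {u u' z z' : V} (huu' : AdjOrEq Γ u u') (heq : l u = l u')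
    (hM : 2 * l u + 1 < M) (hz : IsBelow Γ l z u) (hz' : IsBelow Γ l z' u') (hlz : l z = l z')
    (hpos : 0 < l z) : AdjOrEq Γ z z' := by
  induction hk : l u - l z generalizing u u' with
  | zero =>
    have hzu : Γ.dist u z = 0 := by unfold IsBelow at hz; omega
    have hzu' : Γ.dist u' z' = 0 := by unfold IsBelow at hz'; omega
    rwa [← hl.connected.dist_eq_zero_iff.1 hzu, ← hl.connected.dist_eq_zero_iff.1 hzu']
  | succ k ih =>
    obtain ⟨w, hw, hzw⟩ := hz.exists_mem_lowerNeighborSet hl.toIsHeight (by omega)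
    obtain ⟨w', hw', hzw'⟩ := hz'.exists_mem_lowerNeighborSet hl.toIsHeight (by omega)
    have := hw.2
    have := hw'.2
    refine ih ?_ (by omega) (by omega) hzw hzw' (by omega)
    rcases huu' with rfl | huu'
    · exact hl.adjOrEq (by omega) hw hw'
    · exact hl.adjOrEq_of_adj hΓ huu' heq (by omega) hM hw hw'

end BridgedHeight

section Descent

variable {V : Type*} {Γ : SimpleGraph V} {l : V → ℕ} {M : ℕ} {u v : V}

/-- No geodesic from `u` to `v` starts with a descending step. -/
def NoDescent (Γ : SimpleGraph V) (l : V → ℕ) (u v : V) : Prop :=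
  ∀ w ∈ lowerNeighborSet Γ (Γ.dist v) u, l u ≤ l w

theorem NoDescent.of_mem_lowerNeighborSet {w : V} (hc : Γ.Connected)
    (hvu : NoDescent Γ l v u) (hw : w ∈ lowerNeighborSet Γ (Γ.dist v) u) : NoDescent Γ l v w := by
  intro x hx
  have hwx := hx.2
  have huw := hw.2
  have htri := hc.dist_triangle (u := u) (v := w) (w := x)
  rw [dist_eq_one_iff_adj.2 hw.1] at htri
  rw [SimpleGraph.dist_comm, SimpleGraph.dist_comm (v := u)] at huw
  exact hvu x ((isHeight_dist hc u).mem_lowerNeighborSet_of_lt hx.1 (by omega))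

theorem IsBridgedHeightUpTo.isBelow_of_forall_lt (hl : IsBridgedHeightUpTo Γ l M)
    (hM : l u + l v + Γ.dist v u < M) (h : ∀ w ∈ lowerNeighborSet Γ (Γ.dist v) u, l u < l w) :
    IsBelow Γ l u v := by
  have hv := isHeight_dist hl.connected v
  induction hd : Γ.dist v u generalizing u with
  | zero =>
    rw [hl.connected.dist_eq_zero_iff.1 hd]
    exact .refl u
  | succ k ih =>
    obtain ⟨w, hw⟩ := hv.nonempty_lowerNeighborSet (v := u) (by omega)
    have hdw := hw.2
    have hlw : u ∈ lowerNeighborSet Γ l w := hl.mem_lowerNeighborSet_of_lt hw.1.symm (h w hw)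
    have hlu := hlw.2
    suffices hup : ∀ x ∈ lowerNeighborSet Γ (Γ.dist v) w, l w < l x by
      have := ih (by omega) hup (by omega)
      unfold IsBelow at this ⊢
      omega
    intro x hx
    have hdx := hx.2
    have hlx := hl.le_add_dist x v
    rw [SimpleGraph.dist_comm] at hlx
    have hwx := hl.le_add_one hx.1
    by_contra! hle
    rcases hle.lt_or_eq with hlt | heq
    · have hux := (hl.adjOrEq (by omega) hlw (hl.mem_lowerNeighborSet_of_lt hx.1 hlt)).dist_le_one
      have := hl.connected.dist_triangle (u := v) (v := x) (w := u)
      rw [SimpleGraph.dist_comm (u := x)] at this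
      omega
    · obtain ⟨b, hbw, hbx⟩ := hl.nonempty_inter (by omega) hx.1 heq.symm (by omega)
      have hdb := hv.le_add_one hbx.1.symm
      have hub := hl.adjOrEq (by omega) hlw hbw
      have := h b (hv.mem_lowerNeighborSet_of_lt (hub.adj (by rintro rfl; omega)) (by omega))
      have := hbw.2
      omega

theorem NoDescent.of_level_eq (huv : NoDescent Γ l u v) (hl : IsBridgedHeightUpTo Γ l M)
    (hM : l u + l v + Γ.dist v u < M) {w : V} (hw : w ∈ lowerNeighborSet Γ (Γ.dist v) u)
    (heq : l w = l u) : NoDescent Γ l w v := by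
  have hv := isHeight_dist hl.connected v
  intro x hx
  have hdw := hw.2
  have hdx := hx.2
  have hlx := hl.le_add_dist x v
  rw [SimpleGraph.dist_comm] at hlx
  have hwx := hl.le_add_one hx.1
  by_contra! hlt
  obtain ⟨b, hbu, hbw⟩ := hl.nonempty_inter (by omega) hw.1 heq.symm (by omega)
  have hbx := (hl.adjOrEq (by omega) hbw (hl.mem_lowerNeighborSet_of_lt hx.1 hlt)).dist_le_one
  have := hl.connected.dist_triangle (u := v) (v := x) (w := b)
  rw [SimpleGraph.dist_comm (u := x)] at this
  have := huv b (hv.mem_lowerNeighborSet_of_lt hbu.1 (by omega))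
  have := hbu.2
  omega

theorem NoDescent.exists_level_eq (huv : NoDescent Γ l u v) (hvu : NoDescent Γ l v u)
    (hl : IsBridgedHeightUpTo Γ l M) (hM : l u + l v + Γ.dist v u < M) (hne : u ≠ v) :
    ∃ w ∈ lowerNeighborSet Γ (Γ.dist v) u, l w = l u := by
  by_contra! hcon
  have hbelow := hl.isBelow_of_forall_lt hM fun w hw => (huv w hw).lt_of_ne' (hcon w hw)
  have hpos := hl.connected.pos_dist_of_ne hne.symm
  have hlv : l v = l u + Γ.dist v u := hbelow
  obtain ⟨w, hw, huw⟩ := hbelow.exists_mem_lowerNeighborSet hl.toIsHeight (by omega)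
  have hlw := hw.2
  have hdw : l w = l u + Γ.dist w u := huw
  have := hvu w ⟨hw.1, by rw [SimpleGraph.dist_comm, SimpleGraph.dist_comm (v := v)]; omega⟩
  omega

theorem NoDescent.level_eq (huv : NoDescent Γ l u v) (hvu : NoDescent Γ l v u)
    (hl : IsBridgedHeightUpTo Γ l M) (hM : l u + l v + Γ.dist v u < M) : l u = l v := by
  induction hd : Γ.dist v u generalizing u with
  | zero => rw [hl.connected.dist_eq_zero_iff.1 hd]
  | succ k ih =>
    obtain ⟨w, hw, heq⟩ := huv.exists_level_eq hvu hl hM (by rintro rfl; simp at hd)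
    have := hw.2
    rw [← heq]
    exact ih (huv.of_level_eq hl hM hw heq) (hvu.of_mem_lowerNeighborSet hl.connected hw)
      (by omega) (by omega)

theorem NoDescent.dist_le_two (huv : NoDescent Γ l u v) (hvu : NoDescent Γ l v u)
    (hΓ : IsSevenSystolic Γ) (hl : IsBridgedHeightUpTo Γ l M) (hM : l u + l v + Γ.dist v u < M)
    (h2 : 2 ≤ l u) : Γ.dist v u ≤ 2 := by
  have hv := isHeight_dist hl.connected v
  by_contra! hd
  have hne {w : V} (hw : 0 < Γ.dist v w) : w ≠ v := by
    rintro rfl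
    simp at hw
  obtain ⟨w₁, hw₁, heq₁⟩ := huv.exists_level_eq hvu hl hM (hne (by omega))
  have hd₁ := hw₁.2
  have huv₁ := huv.of_level_eq hl hM hw₁ heq₁
  have hvu₁ := hvu.of_mem_lowerNeighborSet hl.connected hw₁
  obtain ⟨w₂, hw₂, heq₂⟩ := huv₁.exists_level_eq hvu₁ hl (by omega) (hne (by omega))
  have hd₂ := hw₂.2
  have huv₂ := huv₁.of_level_eq hl (by omega) hw₂ heq₂
  have hvu₂ := hvu₁.of_mem_lowerNeighborSet hl.connected hw₂
  obtain ⟨w₃, hw₃, heq₃⟩ := huv₂.exists_level_eq hvu₂ hl (by omega) (hne (by omega))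
  have hd₃ := hw₃.2
  have hlv := huv.level_eq hvu hl hM
  obtain ⟨b, hbu, hbw₁⟩ := hl.nonempty_inter (by omega) hw₁.1 heq₁.symm (by omega)
  obtain ⟨b', hbw₂, hbw₃⟩ := hl.nonempty_inter (by omega) hw₃.1 heq₃.symm (by omega)
  have hbb' :=
    (hl.adjOrEq_of_adj hΓ hw₂.1 heq₂.symm (by omega) (by omega) hbw₁ hbw₂).symm.dist_le_one
  have hdb' := hv.le_add_one hbw₃.1.symm
  have htri := hl.connected.dist_triangle (u := v) (v := b') (w := b)
  have := huv b (hv.mem_lowerNeighborSet_of_lt hbu.1 (by omega))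
  have := hbu.2
  omega

theorem NoDescent.exists_adjOrEq_isBelow (huv : NoDescent Γ l u v) (hvu : NoDescent Γ l v u)
    (hΓ : IsSevenSystolic Γ) (hl : IsBridgedHeightUpTo Γ l M) (hM : l u + l v + Γ.dist v u < M)
    (hlt : Γ.dist v u < l u + l v) :
    ∃ y y', IsBelow Γ l y u ∧ IsBelow Γ l y' v ∧ l y = l y' ∧ AdjOrEq Γ y y' ∧
      l u + l v ≤ Γ.dist v u + 2 * l y := by
  have heq := huv.level_eq hvu hl hM
  by_cases hd : Γ.dist v u ≤ 1
  · exact ⟨u, v, .refl u, .refl v, heq, (AdjOrEq.of_dist_le_one hl.connected hd).symm, by omega⟩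
  have hd2 : Γ.dist v u = 2 := by
    have := huv.dist_le_two hvu hΓ hl hM (by omega)
    omega
  obtain ⟨w, hw, hlw⟩ := huv.exists_level_eq hvu hl hM (by rintro rfl; simp at hd)
  have hdw := hw.2
  have hvw : Γ.Adj v w := dist_eq_one_iff_adj.1 (by omega)
  obtain ⟨b, hbu, hbw⟩ := hl.nonempty_inter (by omega) hw.1 hlw.symm (by omega)
  obtain ⟨b', hbv, hbw'⟩ := hl.nonempty_inter (by omega) hvw (by omega) (by omega)
  have := hbu.2
  have := hbv.2
  exact ⟨b, b', isBelow_of_mem_lowerNeighborSet hbu, isBelow_of_mem_lowerNeighborSet hbv,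
    by omega, hl.adjOrEq (by omega) hbw hbw', by omega⟩

/-- Move `u` and `v` towards each other along descending steps; once neither can descend any more,
they are at the same level and within distance 2. -/
theorem IsBridgedHeightUpTo.exists_adjOrEq_isBelow (hl : IsBridgedHeightUpTo Γ l M)
    (hΓ : IsSevenSystolic Γ) (hM : l u + l v + Γ.dist v u < M)
    (hlt : Γ.dist v u < l u + l v) :
    ∃ y y', IsBelow Γ l y u ∧ IsBelow Γ l y' v ∧ l y = l y' ∧ AdjOrEq Γ y y' ∧
      l u + l v ≤ Γ.dist v u + 2 * l y := by
  induction hd : Γ.dist v u generalizing u v with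
  | zero =>
    obtain rfl := hl.connected.dist_eq_zero_iff.1 hd
    exact ⟨v, v, .refl v, .refl v, rfl, .refl v, by omega⟩
  | succ k ih =>
    by_cases huv : NoDescent Γ l u v
    · by_cases hvu : NoDescent Γ l v u
      · rw [← hd]
        exact huv.exists_adjOrEq_isBelow hvu hΓ hl hM hlt
      · obtain ⟨w, hw, hlw⟩ := by simpa only [NoDescent, not_forall, not_le] using hvu
        have hw' := hl.mem_lowerNeighborSet_of_lt hw.1 hlw
        have hdw := hw.2
        rw [SimpleGraph.dist_comm, SimpleGraph.dist_comm (v := v)] at hdw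
        have := hw'.2
        obtain ⟨y, y', hy, hy', heq, hyy', hle⟩ := ih (u := u) (v := w) (by omega) (by omega)
          (by omega)
        exact ⟨y, y', hy, hy'.trans hl.toIsHeight (isBelow_of_mem_lowerNeighborSet hw'), heq, hyy',
          by omega⟩
    · obtain ⟨w, hw, hlw⟩ := by simpa only [NoDescent, not_forall, not_le] using huv
      have hw' := hl.mem_lowerNeighborSet_of_lt hw.1 hlw
      have hdw := hw.2
      have := hw'.2
      obtain ⟨y, y', hy, hy', heq, hyy', hle⟩ := ih (u := w) (v := v) (by omega) (by omega)
        (by omega)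
      exact ⟨y, y', hy.trans hl.toIsHeight (isBelow_of_mem_lowerNeighborSet hw'), hy', heq, hyy',
        by omega⟩

end Descent

section BridgedDist

variable {V : Type*} {Γ : SimpleGraph V}

theorem dist_getVert_getVert_of_length_eq_dist (hc : Γ.Connected) {u v : V} {p : Γ.Walk u v}
    (hp : p.length = Γ.dist u v) {i j : ℕ} (hij : i ≤ j) (hj : j ≤ p.length) :
    Γ.dist (p.getVert i) (p.getVert j) = j - i := by
  have hui := dist_getVert_getVert_le p (Nat.zero_le i)
  have hjv := dist_getVert_getVert_le p hj
  rw [Walk.getVert_zero] at hui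
  rw [Walk.getVert_length] at hjv
  have := dist_getVert_getVert_le p hij
  have := hc.dist_triangle (u := u) (v := p.getVert i) (w := v)
  have := hc.dist_triangle (u := p.getVert i) (v := p.getVert j) (w := v)
  omega

theorem isBelow_dist_of_mem_support (hc : Γ.Connected) {o u a : V} {p : Γ.Walk o u}
    (hp : p.length = Γ.dist o u) (ha : a ∈ p.support) : IsBelow Γ (Γ.dist o) a u := by
  obtain ⟨i, rfl, hi⟩ := Walk.mem_support_iff_exists_getVert.1 ha
  have hoi := dist_getVert_getVert_of_length_eq_dist hc hp (Nat.zero_le i) hi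
  have hiu := dist_getVert_getVert_of_length_eq_dist hc hp hi le_rfl
  rw [Walk.getVert_zero] at hoi
  rw [Walk.getVert_length, SimpleGraph.dist_comm] at hiu
  unfold IsBelow
  omega

/-- The cycle formed by two geodesics from `o` and an edge between their endpoints is not isometric;
the first inequality says that `a` and `b` are closer than along the cycle through `o`, the second
that they are closer than along the cycle through the edge. -/
theorem IsBridged.exists_shortcut_s13 (hB : IsBridged Γ) {o u v : V} {p : Γ.Walk o u} {q : Γ.Walk o v}
    (hp : p.length = Γ.dist o u) (hq : q.length = Γ.dist o v) (huv : Γ.Adj u v)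
    (h : 3 ≤ p.length + q.length) :
    ∃ a ∈ p.support, ∃ b ∈ q.support, Γ.dist b a < Γ.dist o a + Γ.dist o b ∧
      Γ.dist o a + Γ.dist o b + Γ.dist b a < p.length + q.length + 1 := by
  set c := p.append (.cons huv q.reverse) with hc
  have hlen : c.length = p.length + q.length + 1 := by
    simp [hc, add_assoc]
  have hcp {i : ℕ} (hi : i ≤ p.length) : c.getVert i = p.getVert i := by
    rw [hc, Walk.getVert_append', if_pos hi]
  have hcq {i : ℕ} (hi : p.length < i) : c.getVert i = q.getVert (c.length - i) := by
    obtain ⟨m, rfl⟩ := Nat.exists_eq_add_of_lt hi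
    rw [hc, Walk.getVert_append', if_neg (by omega), ← hc, hlen,
      show p.length + m + 1 - p.length = m + 1 by omega, Walk.getVert_cons_succ,
      Walk.getVert_reverse]
    congr 1
    omega
  obtain ⟨i, j, hij, hj, hlt⟩ := hB.exists_dist_getVert_lt c (by omega)
  rw [lt_min_iff] at hlt
  have hip : i ≤ p.length := by
    by_contra! hi
    rw [hcq hi, hcq (by omega), SimpleGraph.dist_comm,
      dist_getVert_getVert_of_length_eq_dist hB.1 hq (by omega) (by omega)] at hlt
    omega
  have hpj : p.length < j := by
    by_contra! hj
    rw [hcp hip, hcp hj, dist_getVert_getVert_of_length_eq_dist hB.1 hp hij.le hj] at hlt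
    omega
  have hoi := dist_getVert_getVert_of_length_eq_dist hB.1 hp (Nat.zero_le i) hip
  have hoj := dist_getVert_getVert_of_length_eq_dist hB.1 hq (Nat.zero_le (c.length - j)) (by omega)
  rw [Walk.getVert_zero] at hoi hoj
  rw [hcp hip, hcq hpj, SimpleGraph.dist_comm] at hlt
  exact ⟨_, p.getVert_mem_support i, _, q.getVert_mem_support (c.length - j), by omega, by omega⟩

variable {l : V → ℕ} {M : ℕ}

theorem IsBridgedHeightUpTo.adjOrEq_of_adj_of_adj (hl : IsBridgedHeightUpTo Γ l M)
    (hB : IsBridged Γ) {x y w z : V} (hy : y ∈ lowerNeighborSet Γ l x)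
    (hz : z ∈ lowerNeighborSet Γ l x) (hyw : Γ.Adj y w) (hwz : Γ.Adj w z) (heq : l y = l w)
    (hpos : 0 < l w) (hM : 2 * l w + 1 < M) : AdjOrEq Γ y z := by
  by_contra! hcon
  obtain ⟨hne, hyz⟩ := not_or.1 hcon
  have hly := hy.2
  have hlz := hz.2
  obtain ⟨r, hry, hrw⟩ := hl.nonempty_inter (by omega) hyw heq (by omega)
  obtain ⟨r', hrw', hrz'⟩ := hl.nonempty_inter hM hwz (by omega) hpos
  have hlr := hrw.2
  have hlr' := hrw'.2
  have hfour {t : V} (hyt : Γ.Adj y t) (hzt : Γ.Adj z t) (ht : l t + 1 = l y) : False := by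
    have hxt : ¬ Γ.Adj x t := hl.not_adj' (by omega)
    exact (hB.adj_or_adj_of_four_cycle hy.1 hyt hzt.symm hz.1.symm (by rintro rfl; omega)
      hne).elim hxt hyz
  have hyr' : ¬ Γ.Adj y r' := fun h => hfour h hrz'.1 (by omega)
  have hzr : ¬ Γ.Adj z r := fun h => hfour hry.1 h (by omega)
  have hrr' := (hl.adjOrEq (by omega) hrw hrw').adj (by rintro rfl; exact hyr' hry.1)
  exact hB.false_of_five_cycle hy.1 hry.1 hrr' hrz'.1.symm hz.1.symm (hl.not_adj' (by omega))
    (hl.not_adj' (by omega)) hyr' hyz fun h => hzr h.symm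

theorem IsSevenSystolic.exists_adjOrEq_isBelow_of_adj (hΓ : IsSevenSystolic Γ) {o u v : V}
    {p : Γ.Walk o u} {q : Γ.Walk o v} (hp : p.length = Γ.dist o u) (hq : q.length = Γ.dist o v)
    (huv : Γ.Adj u v) (h : 3 ≤ p.length + q.length)
    (hl : IsBridgedHeightUpTo Γ (Γ.dist o) (p.length + q.length + 1)) :
    ∃ a ∈ p.support, ∃ b ∈ q.support,
      Γ.dist o a + Γ.dist o b + Γ.dist b a < p.length + q.length + 1 ∧
      ∃ α β, IsBelow Γ (Γ.dist o) α a ∧ IsBelow Γ (Γ.dist o) β b ∧ Γ.dist o α = Γ.dist o β ∧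
        0 < Γ.dist o α ∧ AdjOrEq Γ α β := by
  obtain ⟨a, ha, b, hb, hlt, hlt'⟩ := hΓ.isBridged.exists_shortcut_s13 hp hq huv h
  obtain ⟨α, β, hα, hβ, heq, hαβ, hle⟩ := hl.exists_adjOrEq_isBelow hΓ hlt' hlt
  exact ⟨a, ha, b, hb, hlt', α, β, hα, hβ, heq, by omega, hαβ⟩

theorem IsSevenSystolic.adjOrEq_of_isBelow_dist (hΓ : IsSevenSystolic Γ) {o x y z α β : V}
    (hl : ∀ o', IsBridgedHeightUpTo Γ (Γ.dist o') (2 * Γ.dist o x))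
    (hy : y ∈ lowerNeighborSet Γ (Γ.dist o) x) (hz : z ∈ lowerNeighborSet Γ (Γ.dist o) x)
    (hαy : IsBelow Γ (Γ.dist o) α y) (hβz : IsBelow Γ (Γ.dist o) β z)
    (heq : Γ.dist o α = Γ.dist o β) (hpos : 0 < Γ.dist o α) (hαβ : AdjOrEq Γ α β) :
    AdjOrEq Γ y z := by
  have hc := hΓ.isBridged.1
  have hα := isHeight_dist hc α
  have hdy := hy.2
  have hdz := hz.2
  have hαy' : Γ.dist o y = Γ.dist o α + Γ.dist y α := hαy
  have hβz' : Γ.dist o z = Γ.dist o β + Γ.dist z β := hβz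
  rw [SimpleGraph.dist_comm (u := y) (v := α)] at hαy'
  rw [SimpleGraph.dist_comm (u := z) (v := β)] at hβz'
  have hx := hα.le_add_one hy.1
  have hx' := hc.dist_triangle (u := o) (v := α) (w := x)
  have hz' := hc.dist_triangle (u := α) (v := β) (w := z)
  have := hαβ.dist_le_one
  have hyα : y ∈ lowerNeighborSet Γ (Γ.dist α) x := ⟨hy.1, by omega⟩
  rcases (show Γ.dist α z ≤ Γ.dist α x by omega).lt_or_eq with hlt | hzx
  · exact (hl α).adjOrEq (by omega) hyα (hα.mem_lowerNeighborSet_of_lt hz.1 hlt)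
  · obtain ⟨w, hwx, hwz⟩ := (hl α).nonempty_inter (by omega) hz.1 hzx.symm (by omega)
    have hdw := hwx.2
    have := hc.dist_triangle (u := o) (v := α) (w := w)
    have := (isHeight_dist hc o).le_add_one hwx.1
    rcases (hl α).adjOrEq (by omega) hyα hwx with rfl | hyw
    · exact .inr hwz.1.symm
    · exact (hl o).adjOrEq_of_adj_of_adj hΓ.isBridged hy hz hyw hwz.1.symm (by omega) (by omega)
        (by omega)

theorem IsSevenSystolic.isClique_lowerNeighborSet_dist (hΓ : IsSevenSystolic Γ) {o x : V}
    (hl : ∀ o', IsBridgedHeightUpTo Γ (Γ.dist o') (2 * Γ.dist o x)) :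
    Γ.IsClique (lowerNeighborSet Γ (Γ.dist o) x) := by
  have hc := hΓ.isBridged.1
  intro y hy z hz hne
  have hdy := hy.2
  have hdz := hz.2
  have hx2 : 2 ≤ Γ.dist o x := by
    by_contra! hlt
    exact hne ((hc.dist_eq_zero_iff.1 (by omega)).symm.trans
      (hc.dist_eq_zero_iff (u := o).1 (by omega)))
  obtain ⟨p, hp⟩ := hc.exists_walk_length_eq_dist o y
  obtain ⟨q, hq⟩ := hc.exists_walk_length_eq_dist o z
  have hpx : (p.concat hy.1.symm).length = Γ.dist o x := by
    rw [Walk.length_concat]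
    omega
  have hlen : (p.concat hy.1.symm).length + q.length + 1 = 2 * Γ.dist o x := by omega
  obtain ⟨a, ha, b, hb, hlt, α, β, hα, hβ, heq, hpos, hαβ⟩ :=
    hΓ.exists_adjOrEq_isBelow_of_adj hpx hq hz.1 (by omega) (hlen ▸ hl o)
  have hbz := isBelow_dist_of_mem_support hc hq hb
  have hay : IsBelow Γ (Γ.dist o) a y := by
    rw [Walk.support_concat, List.mem_append, List.mem_singleton] at ha
    refine ha.elim (isBelow_dist_of_mem_support hc hp) fun hax => ?_
    rw [hax] at hlt
    have := hc.dist_triangle (u := o) (v := b) (w := x)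
    omega
  exact (hΓ.adjOrEq_of_isBelow_dist hl hy hz (hα.trans (hl o).toIsHeight hay)
    (hβ.trans (hl o).toIsHeight hbz) heq hpos hαβ).adj hne

theorem IsSevenSystolic.nonempty_inter_of_isBelow_dist (hΓ : IsSevenSystolic Γ) {o u v α β : V}
    (huv : Γ.Adj u v) (hl : ∀ o', IsBridgedHeightUpTo Γ (Γ.dist o') (2 * Γ.dist o u + 1))
    (heq : Γ.dist o u = Γ.dist o v) (hαu : IsBelow Γ (Γ.dist o) α u)
    (hβv : IsBelow Γ (Γ.dist o) β v) (heq' : Γ.dist o α = Γ.dist o β) (hpos : 0 < Γ.dist o α)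
    (hαβ : AdjOrEq Γ α β) (hlt : Γ.dist o α < Γ.dist o u) :
    (lowerNeighborSet Γ (Γ.dist o) u ∩ lowerNeighborSet Γ (Γ.dist o) v).Nonempty := by
  have hc := hΓ.isBridged.1
  have ho := isHeight_dist hc o
  have hα := isHeight_dist hc α
  have hαu' : Γ.dist o u = Γ.dist o α + Γ.dist u α := hαu
  have hβv' : Γ.dist o v = Γ.dist o β + Γ.dist v β := hβv
  rw [SimpleGraph.dist_comm (u := u) (v := α)] at hαu'
  rw [SimpleGraph.dist_comm (u := v) (v := β)] at hβv'
  have := hc.dist_triangle (u := o) (v := α) (w := v)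
  rcases (show Γ.dist α u ≤ Γ.dist α v by omega).eq_or_lt with huv' | huv'
  · obtain ⟨x, hxu, hxv⟩ := (hl α).nonempty_inter (by omega) huv huv' (by omega)
    have := hxu.2
    have := hc.dist_triangle (u := o) (v := α) (w := x)
    have := ho.le_add_one hxu.1
    exact ⟨x, ⟨hxu.1, by omega⟩, ⟨hxv.1, by omega⟩⟩
  · obtain ⟨w, hw⟩ := (isHeight_dist hc β).nonempty_lowerNeighborSet (v := v) (by omega)
    have := hw.2
    have := hαβ.dist_le_one
    have := hc.dist_triangle (u := α) (v := β) (w := w)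
    have := hc.dist_triangle (u := o) (v := β) (w := w)
    have := hα.le_add_one huv.symm
    have hwv := ho.mem_lowerNeighborSet_of_lt hw.1 (by omega)
    have huw := (hl α).adjOrEq (by omega) (hα.mem_lowerNeighborSet_of_lt huv.symm huv')
      (hα.mem_lowerNeighborSet_of_lt hw.1 (by omega))
    exact ⟨w, ho.mem_lowerNeighborSet_of_lt (huw.adj (by rintro rfl; omega)) (by omega), hwv⟩

theorem IsSevenSystolic.nonempty_inter_lowerNeighborSet_dist (hΓ : IsSevenSystolic Γ) {o u v : V}
    (huv : Γ.Adj u v) (heq : Γ.dist o u = Γ.dist o v) (hpos : 0 < Γ.dist o u)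
    (hl : ∀ o', IsBridgedHeightUpTo Γ (Γ.dist o') (2 * Γ.dist o u + 1)) :
    (lowerNeighborSet Γ (Γ.dist o) u ∩ lowerNeighborSet Γ (Γ.dist o) v).Nonempty := by
  have hc := hΓ.isBridged.1
  rcases (Nat.succ_le_of_lt hpos).eq_or_lt with h1 | h2
  · rw [Nat.succ_eq_add_one, zero_add] at h1
    exact ⟨o, ⟨(dist_eq_one_iff_adj.1 h1.symm).symm, by simpa using h1⟩,
      ⟨(dist_eq_one_iff_adj.1 (h1.trans heq).symm).symm, by simpa using h1.trans heq⟩⟩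
  obtain ⟨p, hp⟩ := hc.exists_walk_length_eq_dist o u
  obtain ⟨q, hq⟩ := hc.exists_walk_length_eq_dist o v
  have hlen : p.length + q.length + 1 = 2 * Γ.dist o u + 1 := by omega
  obtain ⟨a, ha, b, hb, hlt, α, β, hα, hβ, heq', hpos', hαβ⟩ :=
    hΓ.exists_adjOrEq_isBelow_of_adj hp hq huv (by omega) (hlen ▸ hl o)
  have hau := isBelow_dist_of_mem_support hc hp ha
  have hbv := isBelow_dist_of_mem_support hc hq hb
  have hαu := hα.trans (hl o).toIsHeight hau
  have hβv := hβ.trans (hl o).toIsHeight hbv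
  refine hΓ.nonempty_inter_of_isBelow_dist huv hl heq hαu hβv heq' hpos' hαβ ?_
  have := dist_eq_one_iff_adj.2 huv
  have := hc.dist_triangle (u := u) (v := a) (w := v)
  have := hc.dist_triangle (u := a) (v := b) (w := v)
  rw [SimpleGraph.dist_comm (u := a) (v := b), SimpleGraph.dist_comm (u := b) (v := v)] at this
  unfold IsBelow at *
  omega

/-- A height with the properties of the distance to a vertex of a bridged graph at all levels. -/
def IsBridgedHeight (Γ : SimpleGraph V) (l : V → ℕ) : Prop :=
  ∀ M, IsBridgedHeightUpTo Γ l M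

theorem IsSevenSystolic.isBridgedHeight_dist (hΓ : IsSevenSystolic Γ) (o : V) :
    IsBridgedHeight Γ (Γ.dist o) := by
  intro M
  induction M generalizing o with
  | zero => exact ⟨isHeight_dist hΓ.isBridged.1 o, by simp, by simp⟩
  | succ M ih =>
    refine ⟨(ih o).toIsHeight, fun {v} hv => ?_, fun {v w} hv hvw heq hpos => ?_⟩
    · rcases (Nat.le_of_lt_succ hv).lt_or_eq with h | h
      · exact (ih o).isClique h
      · exact hΓ.isClique_lowerNeighborSet_dist (h ▸ ih)
    · rcases (Nat.le_of_lt_succ hv).lt_or_eq with h | h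
      · exact (ih o).nonempty_inter h hvw heq hpos
      · exact hΓ.nonempty_inter_lowerNeighborSet_dist hvw heq hpos (h ▸ ih)

end BridgedDist

section Convexity

variable {V : Type*} {Γ : SimpleGraph V} {l : V → ℕ} {S : Set V}

/-- A set of vertices containing every geodesic between two of its elements. -/
def IsGeodesicallyConvex (Γ : SimpleGraph V) (S : Set V) : Prop :=
  ∀ u ∈ S, ∀ w ∈ S, ∀ m, Γ.dist u m + Γ.dist m w = Γ.dist u w → m ∈ S

theorem IsGeodesicallyConvex.iInter {ι : Sort*} {S : ι → Set V}
    (hS : ∀ i, IsGeodesicallyConvex Γ (S i)) : IsGeodesicallyConvex Γ (⋂ i, S i) :=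
  fun u hu w hw m hm => Set.mem_iInter.2 fun i =>
    hS i u (Set.mem_iInter.1 hu i) w (Set.mem_iInter.1 hw i) m hm

theorem IsGeodesicallyConvex.mem_of_adj_of_adj (hS : IsGeodesicallyConvex Γ S)
    (hc : Γ.Connected) {u m w : V} (hu : u ∈ S) (hw : w ∈ S) (hne : u ≠ w) (huw : ¬ Γ.Adj u w)
    (hum : Γ.Adj u m) (hmw : Γ.Adj m w) : m ∈ S := by
  refine hS u hu w hw m ?_
  rw [dist_eq_two_of_not_adj hc hne huw hum hmw, dist_eq_one_iff_adj.2 hum,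
    dist_eq_one_iff_adj.2 hmw]

theorem exists_induce_walk_length_eq_dist (hc : Γ.Connected) (u w : S)
    (h : ∀ m, IsBelow Γ (Γ.dist w) m u → m ∈ S) :
    ∃ p : (Γ.induce S).Walk u w, p.length = Γ.dist w u := by
  obtain ⟨p, hp⟩ := hc.exists_walk_length_eq_dist (w : V) u
  refine ⟨(p.induce S fun m hm => h m (isBelow_dist_of_mem_support hc hp hm)).reverse, ?_⟩
  rw [Walk.length_reverse, ← hp, ← Walk.length_map (Embedding.induce S).toHom]
  exact congrArg Walk.length (Walk.map_induce _ _)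

theorem IsGeodesicallyConvex.preconnected_induce (hS : IsGeodesicallyConvex Γ S)
    (hc : Γ.Connected) : (Γ.induce S).Preconnected := fun u w => by
  refine (exists_induce_walk_length_eq_dist hc u w fun m hm => hS w w.2 u u.2 m ?_).elim
    fun p _ => p.reachable
  unfold IsBelow at hm
  rw [hm, SimpleGraph.dist_comm (u := m)]

theorem dist_le_induce_walk_length {u w : S} (p : (Γ.induce S).Walk u w) :
    Γ.dist w u ≤ p.length := by
  rw [SimpleGraph.dist_comm, ← Walk.length_map (Embedding.induce S).toHom]
  exact dist_le _

theorem exists_induce_walk_length_eq_dist_of_mem_lowerNeighborSet (hc : Γ.Connected) {w z : S}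
    {r : V} (hr : r ∈ lowerNeighborSet Γ (Γ.dist w) z)
    (h : ∀ m, IsBelow Γ (Γ.dist w) m r → m ∈ S) :
    ∃ p : (Γ.induce S).Walk z w, p.length = Γ.dist w z := by
  obtain ⟨p, hp⟩ := exists_induce_walk_length_eq_dist hc ⟨r, h r (.refl r)⟩ w h
  refine ⟨.cons (induce_adj.2 hr.1) p, ?_⟩
  rw [Walk.length_cons, hp, hr.2]

theorem pos_dist_of_adj (hc : Γ.Connected) {o u v : V} (huv : Γ.Adj u v)
    (h : Γ.dist o u = Γ.dist o v) : 0 < Γ.dist o u := by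
  by_contra hpos
  exact huv.ne ((hc.dist_eq_zero_iff.1 (by omega)).symm.trans
    (hc.dist_eq_zero_iff (u := o).1 (by omega)))

theorem IsSevenSystolic.mem_of_isBelow_dist_of_adj (hΓ : IsSevenSystolic Γ)
    (hloc : ∀ u ∈ S, ∀ w ∈ S, ∀ m, u ≠ w → ¬ Γ.Adj u w → Γ.Adj u m → Γ.Adj m w → m ∈ S)
    {w u u' : S} (huu' : Γ.Adj u u') (hu' : ∀ m, IsBelow Γ (Γ.dist w) m u' → m ∈ S)
    (ih : ∀ z : S, ∀ p : (Γ.induce S).Walk z w, p.length ≤ Γ.dist w u' →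
      ∀ m, IsBelow Γ (Γ.dist w) m z → m ∈ S) {m : V} (hm : IsBelow Γ (Γ.dist w) m u) : m ∈ S := by
  have hc := hΓ.isBridged.1
  have hl := hΓ.isBridgedHeight_dist (w : V)
  have ht := isHeight_dist hc (w : V)
  have hlevel {z : S} (hzu' : Γ.Adj z u') (heq : Γ.dist w z = Γ.dist w u')
      (hmz : IsBelow Γ (Γ.dist w) m z) : m ∈ S := by
    obtain ⟨r, hrz, hru'⟩ := (hl _).nonempty_inter (Nat.lt_succ_self _) hzu' heq
      (pos_dist_of_adj hc hzu' heq)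
    obtain ⟨q, hq⟩ := exists_induce_walk_length_eq_dist_of_mem_lowerNeighborSet hc hrz fun x hx =>
      hu' x (hx.trans ht (isBelow_of_mem_lowerNeighborSet hru'))
    exact ih z q (hq.trans heq).le m hmz
  rcases lt_trichotomy (Γ.dist w u) (Γ.dist w u') with h | h | h
  · exact hu' m (hm.trans ht (isBelow_of_mem_lowerNeighborSet
      (ht.mem_lowerNeighborSet_of_lt huu'.symm h)))
  · exact hlevel huu' h hm
  · by_cases hmu : m = u
    · exact hmu ▸ u.2
    have hdm := hc.pos_dist_of_ne (Ne.symm hmu)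
    obtain ⟨z, hz, hmz⟩ := hm.exists_mem_lowerNeighborSet ht (by unfold IsBelow at hm; omega)
    have hdz := hz.2
    have hu'u := ht.mem_lowerNeighborSet_of_lt huu' h
    have hdu' := hu'u.2
    rcases (hl _).adjOrEq (Nat.lt_succ_self _) hz hu'u with rfl | hzu'
    · exact hu' m hmz
    have heq : Γ.dist w z = Γ.dist w u' := by omega
    obtain ⟨r, hrz, hru'⟩ := (hl _).nonempty_inter (Nat.lt_succ_self _) hzu' heq
      (pos_dist_of_adj hc hzu' heq)
    have hdr := hrz.2
    have hzS : z ∈ S := hloc r (hu' r (isBelow_of_mem_lowerNeighborSet hru')) u u.2 z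
      (by rintro rfl; omega) (ht.not_adj (by omega)) hrz.1.symm hz.1.symm
    exact hlevel (z := ⟨z, hzS⟩) hzu' heq hmz

/-- The interval from `w` to `u` is shown to lie in `S` by moving `u` along a path in `S`. -/
theorem IsSevenSystolic.isGeodesicallyConvex_of_preconnected (hΓ : IsSevenSystolic Γ)
    (hconn : (Γ.induce S).Preconnected)
    (hloc : ∀ u ∈ S, ∀ w ∈ S, ∀ m, u ≠ w → ¬ Γ.Adj u w → Γ.Adj u m → Γ.Adj m w → m ∈ S) :
    IsGeodesicallyConvex Γ S := by
  suffices hmem : ∀ w u : S, (Γ.induce S).Walk u w → ∀ m, IsBelow Γ (Γ.dist w) m u → m ∈ S by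
    intro w hw u hu m hm
    obtain ⟨p⟩ := hconn ⟨u, hu⟩ ⟨w, hw⟩
    exact hmem ⟨w, hw⟩ ⟨u, hu⟩ p m (by rw [IsBelow, ← hm, SimpleGraph.dist_comm (u := m)])
  intro w u p
  induction hn : p.length using Nat.strong_induction_on generalizing u with
  | _ n ih =>
  intro m hm
  cases p with
  | nil =>
    have hwm : Γ.dist (w : V) m = 0 := by
      unfold IsBelow at hm
      rw [SimpleGraph.dist_self] at hm
      omega
    exact hΓ.isBridged.1.dist_eq_zero_iff.1 hwm ▸ w.2
  | @cons _ u' _ huu' p =>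
    rw [Walk.length_cons] at hn
    have hlen := dist_le_induce_walk_length p
    exact hΓ.mem_of_isBelow_dist_of_adj hloc huu' (ih p.length (by omega) u' p rfl)
      (fun z q hq => ih q.length (by omega) z q rfl) hm

theorem IsGeodesicallyConvex.exists_adj_dist_add_one_eq (hS : IsGeodesicallyConvex Γ S)
    (hΓ : IsSevenSystolic Γ) {p q w : V} (hp : p ∈ S) (hq : q ∈ S) (hw : w ∉ S)
    (hwq : Γ.Adj w q) : ∃ x ∈ S, Γ.Adj w x ∧ Γ.dist p x + 1 = Γ.dist p w := by
  have ht := isHeight_dist hΓ.isBridged.1 p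
  induction hd : Γ.dist p q using Nat.strong_induction_on generalizing q with
  | _ d ih =>
  rcases lt_trichotomy (Γ.dist p w) (Γ.dist p q) with h | h | h
  · refine absurd (hS p hp q hq w ?_) hw
    have := ht.le_add_one hwq.symm
    rw [dist_eq_one_iff_adj.2 hwq]
    omega
  · obtain ⟨x, hxw, hxq⟩ := (hΓ.isBridgedHeight_dist p _).nonempty_inter (Nat.lt_succ_self _) hwq h
      (pos_dist_of_adj hΓ.isBridged.1 hwq h)
    have hdx := hxq.2
    refine ih (Γ.dist p x) (by omega) (hS p hp q hq x ?_) hxw.1 rfl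
    rw [dist_eq_one_iff_adj.2 hxq.1.symm, hdx]
  · exact ⟨q, hq, hwq, (ht.mem_lowerNeighborSet_of_lt hwq h).2⟩

/-- The path through `v` joining two nonadjacent elements would close up, through the lower sublevel
set, to an induced cycle of length at most 5. -/
theorem IsHeight.isClique_lowerNeighborSet_of_isGeodesicallyConvex (hl : IsHeight Γ l)
    (hΓ : IsSevenSystolic Γ) {v : V} (hv : 2 ≤ l v)
    (hS : IsGeodesicallyConvex Γ {x | l x + 2 ≤ l v}) : Γ.IsClique (lowerNeighborSet Γ l v) := by
  have hc := hΓ.isBridged.1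
  intro u hu w hw hne
  by_contra huw
  have hlu := hu.2
  have hlw := hw.2
  have hfour {x : V} (hux : Γ.Adj u x) (hwx : Γ.Adj w x) (hx : l x + 2 ≤ l v) : False :=
    (hΓ.isBridged.adj_or_adj_of_four_cycle hu.1 hux hwx.symm hw.1.symm (by rintro rfl; omega)
      hne).elim (hl.not_adj' hx) huw
  obtain ⟨p, hp⟩ := hl.nonempty_lowerNeighborSet (v := u) (by omega)
  obtain ⟨q', hq'⟩ := hl.nonempty_lowerNeighborSet (v := w) (by omega)
  have hlp := hp.2
  have hlq' := hq'.2
  obtain ⟨q, hq, hwq, hpq⟩ := hS.exists_adj_dist_add_one_eq hΓ (p := p) (q := q') (w := w)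
    (show l p + 2 ≤ l v by omega) (show l q' + 2 ≤ l v by omega)
    (show ¬ l w + 2 ≤ l v by omega) hq'.1
  change l q + 2 ≤ l v at hq
  have hpv := dist_eq_two_of_not_adj hc (by rintro rfl; omega) (hl.not_adj (by omega)) hp.1.symm
    hu.1.symm
  have hpw := (isHeight_dist hc p).le_add_one hw.1.symm
  have hd : Γ.dist p q = 0 ∨ Γ.dist p q = 1 ∨ Γ.dist p q = 2 := by omega
  rcases hd with hd | hd | hd
  · obtain rfl := hc.dist_eq_zero_iff.1 hd
    exact hfour hp.1 hwq (by omega)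
  · refine hΓ.isBridged.false_of_five_cycle hu.1 hp.1 (dist_eq_one_iff_adj.1 hd) hwq.symm hw.1.symm
      (hl.not_adj' (by omega)) (hl.not_adj' hq) (fun h => hfour h hwq hq) huw fun h => ?_
    rw [dist_eq_one_iff_adj.2 h] at hpw hpq
    omega
  · have hvw := (hΓ.isBridgedHeight_dist p _).adjOrEq (v := w) (Nat.lt_succ_self _)
      ⟨hw.1.symm, by omega⟩ ⟨hwq, by omega⟩
    exact hl.not_adj' hq (hvw.adj (by rintro rfl; omega))

theorem IsHeight.preconnected_induce_le_succ (hl : IsHeight Γ l) {n : ℕ}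
    (hn : (Γ.induce {x | l x ≤ n}).Preconnected) :
    (Γ.induce {x | l x ≤ n + 1}).Preconnected := by
  have hsub : {x | l x ≤ n} ⊆ {x | l x ≤ n + 1} := fun x hx => Nat.le_succ_of_le hx
  have hdown (u : {x | l x ≤ n + 1}) : ∃ k : {x | l x ≤ n},
      (Γ.induce {x | l x ≤ n + 1}).Reachable u (Set.inclusion hsub k) := by
    by_cases hu : l u ≤ n
    · exact ⟨⟨u, hu⟩, .refl _⟩
    · obtain ⟨k, hk⟩ := hl.nonempty_lowerNeighborSet (v := u) (by omega)
      have hlk := hk.2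
      have hlu : l u ≤ n + 1 := u.2
      exact ⟨⟨k, show l k ≤ n by omega⟩, Adj.reachable (induce_adj.2 hk.1)⟩
  intro u w
  obtain ⟨k, hk⟩ := hdown u
  obtain ⟨k', hk'⟩ := hdown w
  exact hk.trans (((hn k k').map (Γ.induceHomOfLE hsub).toHom).trans hk'.symm)

theorem IsHeight.isGeodesicallyConvex_le (hl : IsHeight Γ l) (hΓ : IsSevenSystolic Γ)
    (h0 : IsGeodesicallyConvex Γ {x | l x ≤ 0}) (n : ℕ) :
    IsGeodesicallyConvex Γ {x | l x ≤ n} := by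
  induction n with
  | zero => exact h0
  | succ n ih =>
    refine hΓ.isGeodesicallyConvex_of_preconnected
      (hl.preconnected_induce_le_succ (ih.preconnected_induce hΓ.isBridged.1))
      fun u (hu : l u ≤ n + 1) w (hw : l w ≤ n + 1) m hne huw hum hmw => ?_
    by_contra hm
    change ¬ l m ≤ n + 1 at hm
    have hmu := hl.mem_lowerNeighborSet_of_lt hum.symm (by omega)
    have hlm := hmu.2
    refine huw (hl.isClique_lowerNeighborSet_of_isGeodesicallyConvex hΓ (by omega) ?_ hmu
      (hl.mem_lowerNeighborSet_of_lt hmw (by omega)) hne)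
    convert ih using 3
    omega

theorem IsHeight.nonempty_inter_of_isGeodesicallyConvex (hl : IsHeight Γ l)
    (hΓ : IsSevenSystolic Γ) {v w : V} (hvw : Γ.Adj v w) (heq : l v = l w) (hpos : 0 < l v)
    (hS : IsGeodesicallyConvex Γ {x | l x + 1 ≤ l v}) :
    (lowerNeighborSet Γ l v ∩ lowerNeighborSet Γ l w).Nonempty := by
  have hc := hΓ.isBridged.1
  obtain ⟨p, hp⟩ := hl.nonempty_lowerNeighborSet hpos
  obtain ⟨q', hq'⟩ := hl.nonempty_lowerNeighborSet (v := w) (by omega)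
  have hlq' := hq'.2
  obtain ⟨q, hq, hwq, hpq⟩ := hS.exists_adj_dist_add_one_eq hΓ (p := p) (q := q') (w := w)
    hp.2.le (show l q' + 1 ≤ l v by omega) (show ¬ l w + 1 ≤ l v by omega) hq'.1
  change l q + 1 ≤ l v at hq
  have hqw := hl.mem_lowerNeighborSet_of_lt hwq (by omega)
  have hpw := hc.dist_triangle (u := p) (v := v) (w := w)
  rw [dist_eq_one_iff_adj.2 hp.1.symm, dist_eq_one_iff_adj.2 hvw] at hpw
  have hlp := hp.2
  have hd : Γ.dist p q = 0 ∨ Γ.dist p q = 1 := by omega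
  rcases hd with hd | hd
  · obtain rfl := hc.dist_eq_zero_iff.1 hd
    exact ⟨p, hp, hqw⟩
  · rcases hΓ.isBridged.adj_or_adj_of_four_cycle hvw hwq (dist_eq_one_iff_adj.1 hd).symm hp.1.symm
      (by rintro rfl; omega) (by rintro rfl; omega) with h | h
    · exact ⟨q, hl.mem_lowerNeighborSet_of_lt h (by omega), hqw⟩
    · exact ⟨p, hp, hl.mem_lowerNeighborSet_of_lt h (by omega)⟩

theorem IsHeight.isBridgedHeight (hl : IsHeight Γ l) (hΓ : IsSevenSystolic Γ)
    (h0 : IsGeodesicallyConvex Γ {x | l x ≤ 0}) : IsBridgedHeight Γ l := by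
  have hS := hl.isGeodesicallyConvex_le hΓ h0
  refine fun M => ⟨hl, fun {v} _ u hu w hw hne => ?_, fun {v w} _ hvw heq hpos => ?_⟩
  · by_contra huw
    have hlu := hu.2
    have hlw := hw.2
    have : l v ≤ l u := (hS (l u)).mem_of_adj_of_adj hΓ.isBridged.1 (show l u ≤ l u from le_rfl)
      (show l w ≤ l u by omega) hne huw hu.1.symm hw.1
    omega
  · refine hl.nonempty_inter_of_isGeodesicallyConvex hΓ hvw heq hpos ?_
    convert hS (l v - 1) using 3
    omega

theorem IsSevenSystolic.isGeodesicallyConvex_ball (hΓ : IsSevenSystolic Γ) (o : V) (n : ℕ) :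
    IsGeodesicallyConvex Γ {x | Γ.dist o x ≤ n} := by
  refine (isHeight_dist hΓ.isBridged.1 o).isGeodesicallyConvex_le hΓ (fun u hu w hw m hm => ?_) n
  simp only [Nat.le_zero, Set.mem_ofPred_eq, hΓ.isBridged.1.dist_eq_zero_iff] at hu hw ⊢
  subst hu hw
  rw [SimpleGraph.dist_self] at hm
  exact hΓ.isBridged.1.dist_eq_zero_iff.1 (by omega)

end Convexity

section SetDist

variable {V : Type*} {Γ : SimpleGraph V} {K : Set V}

/-- The graph distance from a vertex to a set of vertices, with the junk value `0` for the empty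
set. -/
noncomputable def setDist (Γ : SimpleGraph V) (K : Set V) (v : V) : ℕ :=
  sInf (Γ.dist v '' K)

theorem setDist_le {k : V} (hk : k ∈ K) (v : V) : setDist Γ K v ≤ Γ.dist v k :=
  Nat.sInf_le ⟨k, hk, rfl⟩

theorem exists_dist_eq_setDist (hK : K.Nonempty) (v : V) : ∃ k ∈ K, Γ.dist v k = setDist Γ K v :=
  Nat.sInf_mem (hK.image _)

theorem isHeight_setDist (hc : Γ.Connected) (hK : K.Nonempty) : IsHeight Γ (setDist Γ K) where
  connected := hc
  le_add_one {u v} huv := by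
    obtain ⟨k, hk, hvk⟩ := exists_dist_eq_setDist (Γ := Γ) hK v
    have := setDist_le (Γ := Γ) hk u
    have := hc.dist_triangle (u := u) (v := v) (w := k)
    rw [dist_eq_one_iff_adj.2 huv] at this
    omega
  nonempty_lowerNeighborSet {v} hv := by
    obtain ⟨k, hk, hvk⟩ := exists_dist_eq_setDist (Γ := Γ) hK v
    obtain ⟨w, hvw, hwk⟩ := exists_adj_dist_eq hc (u := v) (v := k) (k := setDist Γ K v - 1)
      (by omega)
    obtain ⟨k', hk', hwk'⟩ := exists_dist_eq_setDist (Γ := Γ) hK w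
    have := setDist_le (Γ := Γ) hk w
    have := setDist_le (Γ := Γ) hk' v
    have := hc.dist_triangle (u := v) (v := w) (w := k')
    rw [dist_eq_one_iff_adj.2 hvw] at this
    exact ⟨w, hvw, by omega⟩

theorem IsGeodesicallyConvex.isBridgedHeight_setDist (hK : IsGeodesicallyConvex Γ K)
    (hΓ : IsSevenSystolic Γ) (hne : K.Nonempty) : IsBridgedHeight Γ (setDist Γ K) := by
  refine (isHeight_setDist hΓ.isBridged.1 hne).isBridgedHeight hΓ ?_
  convert hK
  ext v
  refine ⟨fun (hv : setDist Γ K v ≤ 0) => ?_, fun hv => (setDist_le hv v).trans_eq dist_self⟩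
  obtain ⟨k, hk, hvk⟩ := exists_dist_eq_setDist (Γ := Γ) hne v
  rwa [hΓ.isBridged.1.dist_eq_zero_iff.1 (hvk.trans (Nat.le_zero.1 hv))]

end SetDist

section FullHeight

variable {V : Type*} {Γ : SimpleGraph V} {l : V → ℕ}

theorem IsBridgedHeight.isHeight (hl : IsBridgedHeight Γ l) : IsHeight Γ l :=
  (hl 0).toIsHeight

theorem IsBridgedHeight.isClique (hl : IsBridgedHeight Γ l) (v : V) :
    Γ.IsClique (lowerNeighborSet Γ l v) :=
  (hl _).isClique (Nat.lt_succ_self _)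

theorem IsBridgedHeight.adjOrEq (hl : IsBridgedHeight Γ l) {v w w' : V}
    (hw : w ∈ lowerNeighborSet Γ l v) (hw' : w' ∈ lowerNeighborSet Γ l v) : AdjOrEq Γ w w' :=
  .of_isClique (hl.isClique v) hw hw'

theorem IsBridgedHeight.nonempty_inter (hl : IsBridgedHeight Γ l) {v w : V} (hvw : Γ.Adj v w)
    (heq : l v = l w) (hpos : 0 < l v) :
    (lowerNeighborSet Γ l v ∩ lowerNeighborSet Γ l w).Nonempty :=
  (hl _).nonempty_inter (Nat.lt_succ_self _) hvw heq hpos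

theorem IsBridgedHeight.adjOrEq_of_isBelow (hl : IsBridgedHeight Γ l) (hΓ : IsSevenSystolic Γ)
    {u u' z z' : V} (huu' : AdjOrEq Γ u u') (heq : l u = l u') (hz : IsBelow Γ l z u)
    (hz' : IsBelow Γ l z' u') (hlz : l z = l z') (hpos : 0 < l z) : AdjOrEq Γ z z' :=
  (hl _).adjOrEq_of_isBelow hΓ huu' heq (Nat.lt_succ_self _) hz hz' hlz hpos

theorem IsBridgedHeight.adjOrEq_of_mem_lowerNeighborSet (hl : IsBridgedHeight Γ l)
    (hΓ : IsSevenSystolic Γ) {v v' w w' : V} (hvv' : AdjOrEq Γ v v') (heq : l v = l v')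
    (h2 : 2 ≤ l v) (hw : w ∈ lowerNeighborSet Γ l v) (hw' : w' ∈ lowerNeighborSet Γ l v') :
    AdjOrEq Γ w w' := by
  have := hw.2
  have := hw'.2
  exact hl.adjOrEq_of_isBelow hΓ hvv' heq (isBelow_of_mem_lowerNeighborSet hw)
    (isBelow_of_mem_lowerNeighborSet hw') (by omega) (by omega)

theorem IsBridgedHeight.exists_common_isBelow (hl : IsBridgedHeight Γ l) (hΓ : IsSevenSystolic Γ)
    {u v : V} {j : ℕ} (h : Γ.dist u v + 2 * j < l u + l v) :
    ∃ r, IsBelow Γ l r u ∧ IsBelow Γ l r v ∧ l r = j := by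
  rw [SimpleGraph.dist_comm] at h
  obtain ⟨y, y', hyu, hy'v, heq, hyy', hle⟩ :=
    (hl _).exists_adjOrEq_isBelow hΓ (u := u) (v := v) (Nat.lt_succ_self _) (by omega)
  obtain ⟨s, hsy, hsy', hjs⟩ : ∃ s, IsBelow Γ l s y ∧ IsBelow Γ l s y' ∧ j ≤ l s := by
    rcases hyy' with rfl | hyy'
    · exact ⟨y, .refl y, .refl y, by omega⟩
    · obtain ⟨s, hsy, hsy'⟩ := hl.nonempty_inter hyy' heq (by omega)
      exact ⟨s, isBelow_of_mem_lowerNeighborSet hsy, isBelow_of_mem_lowerNeighborSet hsy', by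
        have := hsy.2
        omega⟩
  obtain ⟨r, hrs, hr⟩ := hl.isHeight.exists_isBelow hjs
  have hrs' {t c : V} (hst : IsBelow Γ l s t) (htc : IsBelow Γ l t c) : IsBelow Γ l r c :=
    (hrs.trans hl.isHeight hst).trans hl.isHeight htc
  exact ⟨r, hrs' hsy hyu, hrs' hsy' hy'v, hr⟩

/-- Up to the level of their Gromov product at `o`, two vertices have a common vertex below them.
Such vertices for `u`, `v` and for `v`, `w`, taken at the same level, both lie below `v`, so they
are adjacent or equal. -/
theorem IsSevenSystolic.dist_add_dist_le (hΓ : IsSevenSystolic Γ) (o u v w : V) :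
    Γ.dist u w + Γ.dist o v ≤ max (Γ.dist o w + Γ.dist u v) (Γ.dist o u + Γ.dist v w) + 3 := by
  have hc := hΓ.isBridged.1
  have hl := hΓ.isBridgedHeight_dist o
  generalize hX : min (Γ.dist o u + Γ.dist o v - Γ.dist u v)
    (Γ.dist o v + Γ.dist o w - Γ.dist v w) = X
  by_cases hX3 : X < 3
  · have := hc.dist_triangle (u := u) (v := o) (w := w)
    rw [SimpleGraph.dist_comm (u := u) (v := o)] at this
    omega
  obtain ⟨p, hpu, hpv, hp⟩ :=
    hl.exists_common_isBelow hΓ (u := u) (v := v) (j := (X - 1) / 2) (by omega)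
  obtain ⟨r, hrv, hrw, hr⟩ :=
    hl.exists_common_isBelow hΓ (u := v) (v := w) (j := (X - 1) / 2) (by omega)
  have hpr := (hl.adjOrEq_of_isBelow hΓ (.refl v) rfl hpv hrv (by omega) (by omega)).dist_le_one
  have hup := hc.dist_triangle (u := u) (v := p) (w := w)
  have hpw := hc.dist_triangle (u := p) (v := r) (w := w)
  rw [SimpleGraph.dist_comm (u := r) (v := w)] at hpw
  unfold IsBelow at hpu hrw
  omega

theorem IsBridgedHeight.exists_common_lowerNeighbor_of_adj_of_adj (hl : IsBridgedHeight Γ l)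
    (hΓ : IsSevenSystolic Γ) {x₀ x₁ x₂ y₀ y₂ : V} (h01 : Γ.Adj x₀ x₁) (h12 : Γ.Adj x₁ x₂)
    (hl₀ : l x₀ = l x₁) (hl₂ : l x₂ = l x₁) (h2 : 2 ≤ l x₁)
    (hy₀ : y₀ ∈ lowerNeighborSet Γ l x₀) (hy₂ : y₂ ∈ lowerNeighborSet Γ l x₂)
    (hn : ¬ AdjOrEq Γ y₀ y₂) :
    ∃ y₁, y₁ ∈ lowerNeighborSet Γ l x₀ ∧ y₁ ∈ lowerNeighborSet Γ l x₁ ∧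
      y₁ ∈ lowerNeighborSet Γ l x₂ ∧ Γ.Adj y₀ y₁ ∧ Γ.Adj y₁ y₂ ∧
      ¬ Γ.Adj x₁ y₀ ∧ ¬ Γ.Adj x₁ y₂ := by
  have hly₀ := hy₀.2
  have hly₂ := hy₂.2
  have hx₁y₀ : ¬ Γ.Adj x₁ y₀ := fun h => hn <|
    hl.adjOrEq_of_mem_lowerNeighborSet hΓ (.inr h12) hl₂.symm h2 ⟨h, by omega⟩ hy₂
  have hx₁y₂ : ¬ Γ.Adj x₁ y₂ := fun h => hn <|
    hl.adjOrEq_of_mem_lowerNeighborSet hΓ (.inr h01) hl₀ (by omega) hy₀ ⟨h, by omega⟩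
  obtain ⟨y₁, hy₁, hy₁'⟩ := hl.nonempty_inter h12 hl₂.symm (by omega)
  have hly₁ := hy₁.2
  have hy₀y₁ : Γ.Adj y₀ y₁ :=
    (hl.adjOrEq_of_mem_lowerNeighborSet hΓ (.inr h01) hl₀ (by omega) hy₀ hy₁).adj
      (by rintro rfl; exact hx₁y₀ hy₁.1)
  have hy₁y₂ : Γ.Adj y₁ y₂ := (hl.adjOrEq hy₁' hy₂).adj (by rintro rfl; exact hx₁y₂ hy₁.1)
  have hx₀y₁ : Γ.Adj x₀ y₁ :=
    (hΓ.isBridged.adj_or_adj_of_four_cycle h01 hy₁.1 hy₀y₁.symm hy₀.1.symm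
      (by rintro rfl; omega) (by rintro rfl; omega)).resolve_right hx₁y₀
  exact ⟨y₁, ⟨hx₀y₁, by omega⟩, hy₁, hy₁', hy₀y₁, hy₁y₂, hx₁y₀, hx₁y₂⟩

theorem IsBridgedHeight.mem_lowerNeighborSet_or_mem_lowerNeighborSet (hl : IsBridgedHeight Γ l)
    (hB : IsBridged Γ) {x₀ x₁ x₂ b c : V} (h02 : Γ.Adj x₀ x₂) (heq : l x₀ = l x₂)
    (hb₀ : b ∈ lowerNeighborSet Γ l x₀) (hb₁ : b ∈ lowerNeighborSet Γ l x₁)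
    (hc₁ : c ∈ lowerNeighborSet Γ l x₁) (hc₂ : c ∈ lowerNeighborSet Γ l x₂) :
    c ∈ lowerNeighborSet Γ l x₀ ∨ b ∈ lowerNeighborSet Γ l x₂ := by
  have hlb := hb₀.2
  have hlc := hc₂.2
  rcases hl.adjOrEq hc₁ hb₁ with rfl | hcb
  · exact .inl hb₀
  · exact (hB.adj_or_adj_of_four_cycle h02 hc₂.1 hcb hb₀.1.symm (by rintro rfl; omega)
      (by rintro rfl; omega)).imp (fun h => ⟨h, by omega⟩) fun h => ⟨h, by omega⟩

/-- Otherwise the boundary of the three triangles around `y₁` below `x₀`, `x₁`, `x₂` and around `w₁`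
below `y₀`, `y₁`, `y₂` gives an induced 6-cycle `x₀ x₁ x₂ y₂ w₁ y₀`. -/
theorem IsBridgedHeight.adjOrEq_of_adjOrEq_of_adjOrEq (hl : IsBridgedHeight Γ l)
    (hΓ : IsSevenSystolic Γ) {x₀ x₁ x₂ y₀ y₂ w₀ w₂ : V} (h01 : AdjOrEq Γ x₀ x₁)
    (h12 : AdjOrEq Γ x₁ x₂) (hl₀ : l x₀ = l x₁) (hl₂ : l x₂ = l x₁) (h3 : 3 ≤ l x₁)
    (hy₀ : y₀ ∈ lowerNeighborSet Γ l x₀) (hy₂ : y₂ ∈ lowerNeighborSet Γ l x₂)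
    (hw₀ : w₀ ∈ lowerNeighborSet Γ l y₀) (hw₂ : w₂ ∈ lowerNeighborSet Γ l y₂) :
    AdjOrEq Γ w₀ w₂ := by
  have hly₀ := hy₀.2
  have hly₂ := hy₂.2
  by_cases hy : AdjOrEq Γ y₀ y₂
  · exact hl.adjOrEq_of_mem_lowerNeighborSet hΓ hy (by omega) (by omega) hw₀ hw₂
  have hx : ¬ AdjOrEq Γ x₀ x₂ := fun h => hy <|
    hl.adjOrEq_of_mem_lowerNeighborSet hΓ h (by omega) (by omega) hy₀ hy₂
  have hadj01 : Γ.Adj x₀ x₁ := h01.adj (by rintro rfl; exact hx h12)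
  have hadj12 : Γ.Adj x₁ x₂ := h12.adj (by rintro rfl; exact hx h01)
  obtain ⟨y₁, -, hy₁x₁, -, hy₀y₁, hy₁y₂, hx₁y₀, hx₁y₂⟩ :=
    hl.exists_common_lowerNeighbor_of_adj_of_adj hΓ hadj01 hadj12 hl₀ hl₂ (by omega) hy₀ hy₂ hy
  have hly₁ := hy₁x₁.2
  by_contra hw
  obtain ⟨w₁, hw₁y₀, -, hw₁y₂, -⟩ := hl.exists_common_lowerNeighbor_of_adj_of_adj hΓ hy₀y₁ hy₁y₂
    (by omega) (by omega) (by omega) hw₀ hw₂ hw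
  have hlw₁ := hw₁y₀.2
  exact hΓ.false_of_six_cycle hadj01 hadj12 hy₂.1 hw₁y₂.1 hw₁y₀.1.symm hy₀.1.symm
    (fun h => hx (.inr h)) (fun h => hy (hl.adjOrEq hy₀ ⟨h, by omega⟩))
    (hl.isHeight.not_adj' (by omega)) hx₁y₂ (hl.isHeight.not_adj' (by omega)) hx₁y₀
    (hl.isHeight.not_adj' (by omega)) (fun h => hy (hl.adjOrEq ⟨h, by omega⟩ hy₂))
    (fun h => hy (.inr h.symm))

end FullHeight

section GraphAction

variable {V : Type*} {Γ : SimpleGraph V} {G : Type*} [Group G] [MulAction G V]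

/-- `G` acts on `Γ` by graph automorphisms. -/
def PreservesAdj (Γ : SimpleGraph V) (G : Type*) [Group G] [MulAction G V] : Prop :=
  ∀ (g : G) (u v : V), Γ.Adj (g • u) (g • v) ↔ Γ.Adj u v

theorem PreservesAdj.dist_smul_le (hact : PreservesAdj Γ G) (hc : Γ.Connected) (g : G) (u v : V) :
    Γ.dist (g • u) (g • v) ≤ Γ.dist u v := by
  obtain ⟨p, hp⟩ := hc.exists_walk_length_eq_dist u v
  let φ : Γ →g Γ := ⟨(g • ·), (hact g _ _).2⟩
  rw [← hp, ← Walk.length_map φ p]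
  exact dist_le _

theorem PreservesAdj.dist_smul (hact : PreservesAdj Γ G) (hc : Γ.Connected) (g : G) (u v : V) :
    Γ.dist (g • u) (g • v) = Γ.dist u v :=
  (hact.dist_smul_le hc g u v).antisymm <| by
    simpa using hact.dist_smul_le hc g⁻¹ (g • u) (g • v)

theorem PreservesAdj.setDist_smul (hact : PreservesAdj Γ G) (hc : Γ.Connected) {g : G} {K : Set V}
    (hK : g • K = K) (v : V) : setDist Γ K (g • v) = setDist Γ K v := by
  have himage : Γ.dist (g • v) '' K = Γ.dist v '' K := by
    conv_lhs => rw [← hK]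
    simp only [← Set.image_smul, Set.image_image, hact.dist_smul hc]
  rw [setDist, setDist, himage]

theorem zpow_smul_invariant {α : Type*} {l : V → α} {g : G} (hl : ∀ v, l (g • v) = l v) (k : ℤ)
    (v : V) : l (g ^ k • v) = l v := by
  induction k using Int.induction_on generalizing v with
  | zero => simp
  | succ k ih => rw [zpow_add_one, mul_smul, ih, hl]
  | pred k ih => rw [zpow_sub_one, mul_smul, ih, ← hl, smul_inv_smul]

theorem PreservesAdj.smul_mem_lowerNeighborSet_iff (hact : PreservesAdj Γ G) {l : V → ℕ} {g : G}
    (hl : ∀ v, l (g • v) = l v) {v w : V} :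
    g • w ∈ lowerNeighborSet Γ l (g • v) ↔ w ∈ lowerNeighborSet Γ l v := by
  simp only [lowerNeighborSet, Set.mem_ofPred_eq, hact g, hl]

theorem PreservesAdj.smul_lowerNeighborSet (hact : PreservesAdj Γ G) {l : V → ℕ} {g : G}
    (hl : ∀ v, l (g • v) = l v) (v : V) :
    g • lowerNeighborSet Γ l v = lowerNeighborSet Γ l (g • v) := by
  ext w
  rw [Set.mem_smul_set_iff_inv_smul_mem, ← hact.smul_mem_lowerNeighborSet_iff hl, smul_inv_smul]

theorem PreservesAdj.zpow_smul_mem_lowerNeighborSet_iff (hact : PreservesAdj Γ G) {l : V → ℕ}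
    {g : G} (hl : ∀ v, l (g • v) = l v) {v w : V} {j k : ℤ} :
    g ^ j • w ∈ lowerNeighborSet Γ l (g ^ k • v) ↔
      w ∈ lowerNeighborSet Γ l (g ^ (k - j) • v) := by
  rw [← hact.smul_mem_lowerNeighborSet_iff (zpow_smul_invariant hl j) (w := w), smul_smul,
    ← zpow_add, add_sub_cancel]

end GraphAction

section StronglyRigid

variable {V : Type*} {Γ : SimpleGraph V} {G : Type*} [Group G] [MulAction G V] {l : V → ℕ} {h : G}

theorem StronglyRigid.eq_one_of_smul_smul_eq (hsr : StronglyRigid Γ G) {a : V}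
    (hadj : Γ.Adj a (h • a)) (ha : h • h • a = a) : h = 1 := by
  refine hsr h
    ⟨{a, h • a}, isClique_pair.2 fun _ => hadj, ⟨a, by simp, h • a, by simp, hadj.ne⟩, ?_⟩
  rw [Set.smul_set_insert, Set.smul_set_singleton, ha, Set.pair_comm]

theorem StronglyRigid.eq_one_of_smul_eq (hsr : StronglyRigid Γ G) (hact : PreservesAdj Γ G)
    (hl : IsBridgedHeight Γ l) (hinv : ∀ v, l (h • v) = l v) {b : V} (hb : h • b = b)
    (hpos : 0 < l b) : h = 1 := by
  obtain ⟨w, hw⟩ := hl.isHeight.nonempty_lowerNeighborSet hpos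
  refine hsr h ⟨insert b (lowerNeighborSet Γ l b),
    (hl.isClique b).insert fun v hv _ => hv.1, ⟨b, by simp, w, by simp [hw], hw.1.ne⟩, ?_⟩
  rw [Set.smul_set_insert, hact.smul_lowerNeighborSet hinv, hb]

theorem StronglyRigid.eq_one_of_common_upper (hsr : StronglyRigid Γ G) (hact : PreservesAdj Γ G)
    (hl : IsBridgedHeight Γ l) (hinv : ∀ v, l (h • v) = l v) {b : V} (hpos : 0 < l b)
    (hcommon : ∀ i j : ℤ, ∃ v, h ^ i • b ∈ lowerNeighborSet Γ l v ∧
      h ^ j • b ∈ lowerNeighborSet Γ l v) : h = 1 := by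
  by_cases hb : h • b = b
  · exact hsr.eq_one_of_smul_eq hact hl hinv hb hpos
  let t : Subgroup.zpowers h := ⟨h, Subgroup.mem_zpowers h⟩
  refine hsr h ⟨MulAction.orbit (Subgroup.zpowers h) b, ?_, ⟨b, MulAction.mem_orbit_self b, h • b,
    MulAction.mem_orbit b t, Ne.symm hb⟩, MulAction.smul_orbit t b⟩
  rintro _ ⟨⟨_, i, rfl⟩, rfl⟩ _ ⟨⟨_, j, rfl⟩, rfl⟩ hne
  obtain ⟨v, hi, hj⟩ := hcommon i j
  exact hl.isClique v hi hj hne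

theorem forall_nonneg_or_exists_last {p : ℤ → Prop} (h0 : p 0) (h1 : p 1) :
    (∀ k, 0 ≤ k → p k) ∨ ∃ k, p k ∧ p (k + 1) ∧ ¬ p (k + 2) := by
  refine or_iff_not_imp_right.2 fun hlast k hk => ?_
  push Not at hlast
  suffices p k ∧ p (k + 1) from this.1
  induction k, hk using Int.leInduction with
  | base => exact ⟨h0, by rwa [zero_add]⟩
  | succ k _ ih =>
    exact ⟨ih.2, by simpa only [add_assoc, one_add_one_eq_two] using hlast k ih.1 ih.2⟩

/-- If the run of consecutive `k` for which `b` is a lower neighbour of `h ^ k • a` had a last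
element `k + 1` and also a first element, then the translate `c` of `b` that moves the first element
to `k + 1` would give a 4-cycle `h ^ k • a`, `h ^ (k + 2) • a`, `c`, `b` without diagonals. -/
theorem forall_mem_lowerNeighborSet_zpow (hB : IsBridged Γ) (hact : PreservesAdj Γ G)
    (hl : IsBridgedHeight Γ l) (hinv : ∀ v, l (h • v) = l v) {a b : V}
    (ha : Γ.Adj a (h • h • a)) (hba : b ∈ lowerNeighborSet Γ l a)
    (hbha : b ∈ lowerNeighborSet Γ l (h • a)) :
    (∀ k : ℤ, 0 ≤ k → b ∈ lowerNeighborSet Γ l (h ^ k • a)) ∨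
      ∀ k : ℤ, k ≤ 1 → b ∈ lowerNeighborSet Γ l (h ^ k • a) := by
  have hlz := zpow_smul_invariant hinv
  have h0 : b ∈ lowerNeighborSet Γ l (h ^ (0 : ℤ) • a) := by simpa using hba
  have h1 : b ∈ lowerNeighborSet Γ l (h ^ (1 : ℤ) • a) := by simpa using hbha
  rcases forall_nonneg_or_exists_last (p := fun k => b ∈ lowerNeighborSet Γ l (h ^ k • a)) h0 h1
    with hnonneg | ⟨k, hk, hk1, hk2⟩
  · exact .inl hnonneg
  rcases forall_nonneg_or_exists_last (p := fun k => b ∈ lowerNeighborSet Γ l (h ^ (1 - k) • a))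
    h1 h0 with hnonneg | ⟨m, hm, hm1, hm2⟩
  · exact .inr fun k hk => by simpa using hnonneg (1 - k) (by omega)
  exfalso
  let c := h ^ (k + 1 + m) • b
  have hshift (i : ℤ) : c ∈ lowerNeighborSet Γ l (h ^ i • a) ↔
      b ∈ lowerNeighborSet Γ l (h ^ (i - (k + 1 + m)) • a) :=
    hact.zpow_smul_mem_lowerNeighborSet_iff hinv
  have hck : c ∉ lowerNeighborSet Γ l (h ^ k • a) := by
    rwa [hshift, show k - (k + 1 + m) = 1 - (m + 2) by ring]
  have hck1 : c ∈ lowerNeighborSet Γ l (h ^ (k + 1) • a) := by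
    rwa [hshift, show k + 1 - (k + 1 + m) = 1 - (m + 1) by ring]
  have hck2 : c ∈ lowerNeighborSet Γ l (h ^ (k + 2) • a) := by
    rwa [hshift, show k + 2 - (k + 1 + m) = 1 - m by ring]
  have hadj : Γ.Adj (h ^ k • a) (h ^ (k + 2) • a) := by
    rw [zpow_add, mul_smul, zpow_two, mul_smul]
    exact (hact _ _ _).2 ha
  exact (hl.mem_lowerNeighborSet_or_mem_lowerNeighborSet hB hadj
    ((hlz _ _).trans (hlz _ _).symm) hk hk1 hck1 hck2).elim hck hk2

/-- Let `b` be a common lower neighbour of `a` and `h • a`. Any two translates of `b` have a common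
upper neighbour `h ^ k • a`, so the orbit of `b` is a clique. -/
theorem StronglyRigid.eq_one_of_adjOrEq (hsr : StronglyRigid Γ G) (hB : IsBridged Γ)
    (hact : PreservesAdj Γ G) (hl : IsBridgedHeight Γ l) (hinv : ∀ v, l (h • v) = l v) {a : V}
    (h2 : 2 ≤ l a) (ha1 : AdjOrEq Γ a (h • a)) (ha2 : AdjOrEq Γ a (h • h • a)) : h = 1 := by
  rcases ha1 with ha1 | ha1
  · exact hsr.eq_one_of_smul_eq hact hl hinv ha1.symm (by omega)
  rcases ha2 with ha2 | ha2
  · exact hsr.eq_one_of_smul_smul_eq ha1 ha2.symm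
  obtain ⟨b, hba, hbha⟩ := hl.nonempty_inter ha1 (hinv a).symm (by omega)
  refine hsr.eq_one_of_common_upper hact hl hinv (b := b) (by have := hba.2; omega) fun i j => ?_
  rcases forall_mem_lowerNeighborSet_zpow hB hact hl hinv ha2 hba hbha with hb | hb
  · refine ⟨h ^ max i j • a, ?_, ?_⟩ <;>
      exact (hact.zpow_smul_mem_lowerNeighborSet_iff hinv).2 (hb _ (by omega))
  · refine ⟨h ^ min i j • a, ?_, ?_⟩ <;>
      exact (hact.zpow_smul_mem_lowerNeighborSet_iff hinv).2 (hb _ (by omega))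

end StronglyRigid

section Displacement

variable {V : Type*} {Γ : SimpleGraph V} {G : Type*} [Group G] [MulAction G V]

/-- If both fail, `a` and its translates have vertices at level 4 below them that are joined to a
third vertex, so the descents of `a` and its translates are adjacent or equal at level 2. -/
theorem StronglyRigid.two_mul_le_dist_smul (hsr : StronglyRigid Γ G) (hΓ : IsSevenSystolic Γ)
    (hact : PreservesAdj Γ G) {l : V → ℕ} (hl : IsBridgedHeight Γ l) {h : G} (h1 : h ≠ 1)
    (hinv : ∀ v, l (h • v) = l v) (a : V) :
    2 * l a ≤ Γ.dist a (h • a) + 8 ∨ 2 * l a ≤ Γ.dist a (h • h • a) + 8 := by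
  by_contra! hcon
  obtain ⟨a₄, ha₄, hla₄⟩ := hl.isHeight.exists_isBelow (u := a) (j := 4) (by omega)
  obtain ⟨a₃, ha₃⟩ := hl.isHeight.nonempty_lowerNeighborSet (v := a₄) (by omega)
  have hla₃ := ha₃.2
  obtain ⟨a₂, ha₂⟩ := hl.isHeight.nonempty_lowerNeighborSet (v := a₃) (by omega)
  have hla₂ := ha₂.2
  have hadj (g : G) (hg : ∀ v, l (g • v) = l v) (hd : Γ.dist a (g • a) + 8 < 2 * l a) :
      AdjOrEq Γ a₂ (g • a₂) := by
    obtain ⟨z, hza, hzga, hz⟩ :=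
      hl.exists_common_isBelow hΓ (u := a) (v := g • a) (j := 4) (by rw [hg]; omega)
    have hga₄ : IsBelow Γ l (g • a₄) (g • a) := by
      rwa [IsBelow, hg, hg, hact.dist_smul hΓ.isBridged.1]
    exact hl.adjOrEq_of_adjOrEq_of_adjOrEq hΓ
      (hl.adjOrEq_of_isBelow hΓ (.refl a) rfl ha₄ hza (by omega) (by omega))
      (hl.adjOrEq_of_isBelow hΓ (.refl (g • a)) rfl hzga hga₄ (by rw [hg]; omega) (by omega))
      (by omega) (by rw [hg]; omega) (by omega) ha₃ ((hact.smul_mem_lowerNeighborSet_iff hg).2 ha₃)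
      ha₂ ((hact.smul_mem_lowerNeighborSet_iff hg).2 ha₂)
  have hh := hadj (h * h) (fun v => by rw [mul_smul, hinv, hinv]) (by rw [mul_smul]; exact hcon.2)
  rw [mul_smul] at hh
  exact h1 (hsr.eq_one_of_adjOrEq hΓ.isBridged hact hl hinv (by omega) (hadj h hinv hcon.1) hh)

theorem PreservesAdj.smul_iInter_zpow_ball (hact : PreservesAdj Γ G) (hc : Γ.Connected) (h : G)
    (x : V) (C : ℕ) :
    h • ⋂ k : ℤ, {v | Γ.dist (h ^ k • x) v ≤ C} = ⋂ k : ℤ, {v | Γ.dist (h ^ k • x) v ≤ C} := by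
  ext v
  simp only [Set.mem_smul_set_iff_inv_smul_mem, Set.mem_iInter, Set.mem_ofPred_eq]
  refine (Equiv.addLeft (1 : ℤ)).forall_congr fun k => ?_
  rw [Equiv.coe_addLeft, zpow_one_add, mul_smul, ← hact.dist_smul hc h, smul_inv_smul]

/-- Apply `StronglyRigid.two_mul_le_dist_smul` to the distance from the intersection of the balls of
radius `C` around the points of the orbit of `x`: this is an `h`-invariant convex set within
distance `C` of `x`. -/
theorem StronglyRigid.exists_two_mul_dist_le (hsr : StronglyRigid Γ G) (hΓ : IsSevenSystolic Γ)
    (hact : PreservesAdj Γ G) {h : G} (h1 : h ≠ 1) {x : V} {C : ℕ}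
    (hC : ∀ n : ℤ, Γ.dist x (h ^ n • x) ≤ C) (y : V) :
    ∃ f : G, Γ.dist x (f • x) ≤ C ∧ 2 * Γ.dist x y ≤ Γ.dist y (f • y) + 2 * C + 8 := by
  have hc := hΓ.isBridged.1
  let K : Set V := ⋂ k : ℤ, {v | Γ.dist (h ^ k • x) v ≤ C}
  have hK : IsGeodesicallyConvex Γ K := .iInter fun k => hΓ.isGeodesicallyConvex_ball (h ^ k • x) C
  have hxK : x ∈ K := Set.mem_iInter.2 fun k => by
    rw [Set.mem_ofPred_eq, SimpleGraph.dist_comm]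
    exact hC k
  have hxy : Γ.dist x y ≤ setDist Γ K y + C := by
    obtain ⟨k, hkK, hk⟩ := exists_dist_eq_setDist (Γ := Γ) ⟨x, hxK⟩ y
    have hxk : Γ.dist x k ≤ C := by simpa using Set.mem_iInter.1 hkK 0
    have := hc.dist_triangle (u := x) (v := k) (w := y)
    rw [SimpleGraph.dist_comm (u := k)] at this
    omega
  rcases hsr.two_mul_le_dist_smul hΓ hact (hK.isBridgedHeight_setDist hΓ ⟨x, hxK⟩) h1
    (hact.setDist_smul hc (hact.smul_iInter_zpow_ball hc h x C)) y with hy | hy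
  · exact ⟨h, by simpa using hC 1, by omega⟩
  · refine ⟨h * h, by simpa only [zpow_two] using hC 2, ?_⟩
    rw [mul_smul]
    omega

end Displacement

section PingPong

variable {V : Type*} {Γ : SimpleGraph V} {G : Type*} [Group G] [MulAction G V]

theorem IsSevenSystolic.le_dist_of_forall_lt_dist (hΓ : IsSevenSystolic Γ) {z : ℕ → V} {a : ℕ}
    (hle : ∀ i, Γ.dist (z i) (z (i + 1)) ≤ a) (hlt : ∀ i, a + 3 < Γ.dist (z i) (z (i + 2)))
    (k : ℕ) : k ≤ Γ.dist (z 0) (z k) := by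
  suffices k ≤ Γ.dist (z 0) (z k) ∧ Γ.dist (z 0) (z k) < Γ.dist (z 0) (z (k + 1)) from this.1
  induction k with
  | zero =>
    have := hΓ.isBridged.1.dist_triangle (u := z 0) (v := z 1) (w := z 2)
    have : Γ.dist (z 1) (z 2) ≤ a := hle 1
    have : a + 3 < Γ.dist (z 0) (z 2) := hlt 0
    rw [SimpleGraph.dist_self, zero_add]
    omega
  | succ k ih =>
    have := hΓ.dist_add_dist_le (z 0) (z k) (z (k + 1)) (z (k + 2))
    have := hle k
    have : Γ.dist (z (k + 1)) (z (k + 2)) ≤ a := hle (k + 1)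
    have := hlt k
    rw [show k + 1 + 1 = k + 2 from rfl]
    omega

theorem IsSevenSystolic.two_mul_le_dist_pow_smul (hΓ : IsSevenSystolic Γ)
    (hact : PreservesAdj Γ G) {γ : G} {p q : V} {a : ℕ} (hpq : Γ.dist p q ≤ a)
    (hqp : Γ.dist q (γ • p) ≤ a) (hp : a + 3 < Γ.dist p (γ • p)) (hq : a + 3 < Γ.dist q (γ • q))
    (k : ℕ) : 2 * k ≤ Γ.dist p (γ ^ k • p) := by
  have hdist := hact.dist_smul hΓ.isBridged.1
  let z (i : ℕ) : V := γ ^ (i / 2) • if Even i then p else q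
  have heven (m : ℕ) : z (2 * m) = γ ^ m • p := by simp [z]
  have hodd (m : ℕ) : z (2 * m + 1) = γ ^ m • q := by
    simp only [z, Nat.not_even_two_mul_add_one, if_false, show (2 * m + 1) / 2 = m by omega]
  have hz := hΓ.le_dist_of_forall_lt_dist (z := z) (a := a) (fun i => ?_) (fun i => ?_) (2 * k)
  · rwa [heven, show z 0 = p by simp [z]] at hz
  · rcases Nat.even_or_odd' i with ⟨m, rfl | rfl⟩
    · rwa [heven, hodd, hdist]
    · rwa [show 2 * m + 1 + 1 = 2 * (m + 1) by ring, hodd, heven, pow_succ, mul_smul, hdist]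
  · rcases Nat.even_or_odd' i with ⟨m, rfl | rfl⟩
    · rwa [show 2 * m + 2 = 2 * (m + 1) by ring, heven, heven, pow_succ, mul_smul, hdist]
    · rwa [show 2 * m + 1 + 2 = 2 * (m + 1) + 1 by ring, hodd, hodd, pow_succ, mul_smul, hdist]

/-- Ping-pong between `x` and `y`: the orbit of `x` under `f * f'` interleaved with that of `f • y`
is a sequence with steps of length about `n = Γ.dist x y`, any two of which lead to distance about
`2 * n`. -/
theorem IsSevenSystolic.two_mul_le_dist_mul_pow_smul (hΓ : IsSevenSystolic Γ)
    (hact : PreservesAdj Γ G) {f f' : G} {x y : V} {C : ℕ} (hfx : Γ.dist x (f • x) ≤ C)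
    (hfy : Γ.dist y (f' • y) ≤ C) (hy : 2 * Γ.dist x y ≤ Γ.dist y (f • y) + 2 * C + 8)
    (hx : 2 * Γ.dist x y ≤ Γ.dist x (f' • x) + 2 * C + 8) (hxy : 4 * C + 11 < Γ.dist x y) (k : ℕ) :
    2 * k ≤ Γ.dist x ((f * f') ^ k • x) := by
  have hdist := hact.dist_smul hΓ.isBridged.1
  have htri (u v w : V) := hΓ.isBridged.1.dist_triangle (u := u) (v := v) (w := w)
  have hcomm (u v : V) := SimpleGraph.dist_comm (G := Γ) (u := u) (v := v)
  refine hΓ.two_mul_le_dist_pow_smul hact (q := f • y) (a := Γ.dist x y + C) ?_ ?_ ?_ ?_ k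
  · have := htri x (f • x) (f • y)
    rw [hdist] at this
    omega
  · have := htri y (f' • y) (f' • x)
    rw [hdist, hcomm y x] at this
    rw [mul_smul, hdist]
    omega
  · have := htri (f • x) x (f • f' • x)
    rw [hdist, hcomm (f • x) x] at this
    rw [mul_smul]
    omega
  · have := htri (f' • y) y (f' • f • y)
    rw [hdist, hcomm (f' • y) y] at this
    rw [mul_smul, hdist]
    omega

/-- If `g` moves `x` far, play ping-pong between `x` and `g • x`, with a conjugate by `g` of an
element that moves `x` little acting near `g • x`. -/
theorem StronglyRigid.dist_smul_le (hsr : StronglyRigid Γ G) (hΓ : IsSevenSystolic Γ)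
    (hact : PreservesAdj Γ G)
    (hle : ∀ (g : G) (x : V), ∃ C : ℕ, ∀ n : ℤ, Γ.dist x (g ^ n • x) ≤ C) {h : G} (h1 : h ≠ 1)
    {x : V} {C : ℕ} (hC : ∀ n : ℤ, Γ.dist x (h ^ n • x) ≤ C) (g : G) :
    Γ.dist x (g • x) ≤ 4 * C + 11 := by
  by_contra! hg
  have hdist := hact.dist_smul hΓ.isBridged.1
  obtain ⟨f, hfx, hf⟩ := hsr.exists_two_mul_dist_le hΓ hact h1 hC (g • x)
  obtain ⟨f₀, hf₀x, hf₀⟩ := hsr.exists_two_mul_dist_le hΓ hact h1 hC (g⁻¹ • x)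
  have hconj : Γ.dist (g • x) ((g * f₀ * g⁻¹) • g • x) ≤ C := by
    rwa [smul_smul, inv_mul_cancel_right, mul_smul, hdist]
  have hconj' : 2 * Γ.dist x (g • x) ≤ Γ.dist x ((g * f₀ * g⁻¹) • x) + 2 * C + 8 := by
    rwa [← hdist g x, smul_inv_smul, SimpleGraph.dist_comm, ← hdist g (g⁻¹ • x), smul_inv_smul,
      smul_smul, smul_smul] at hf₀
  obtain ⟨D, hD⟩ := hle (f * (g * f₀ * g⁻¹)) x
  have hunbounded := hΓ.two_mul_le_dist_mul_pow_smul hact hfx hconj hf hconj' hg (D + 1)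
  have hbounded := hD (D + 1 : ℕ)
  rw [zpow_natCast] at hbounded
  omega

end PingPong

theorem systolic_locally_elliptic_implies_elliptic_general {V : Type*} (Γ : SimpleGraph V)
    (hΓ : IsSevenSystolic Γ) (G : Type*) [Group G] [MulAction G V] (hact : PreservesAdj Γ G)
    (hsr : StronglyRigid Γ G)
    (hle : ∀ (g : G) (x : V), ∃ C : ℕ, ∀ n : ℤ, Γ.dist x ((g ^ n) • x) ≤ C) :
    ∃ (x : V) (C : ℕ), ∀ h : G, Γ.dist x (h • x) ≤ C := by
  obtain ⟨x⟩ := hΓ.isBridged.1.nonempty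
  by_cases! hG : ∃ h : G, h ≠ 1
  · obtain ⟨h, h1⟩ := hG
    obtain ⟨C, hC⟩ := hle h x
    exact ⟨x, 4 * C + 11, hsr.dist_smul_le hΓ hact hle h1 hC⟩
  · exact ⟨x, 0, fun g => by rw [hG g, one_smul, SimpleGraph.dist_self]⟩

/-- Locally elliptic strongly rigid actions of finitely generated groups on
1-skeleta of 18-systolic complexes are elliptic. -/
theorem systolic_locally_elliptic_implies_elliptic {V : Type*} (Γ : SimpleGraph V)
    (h18 : IsEighteenSystolic Γ) (G : Type*) [Group G] [Group.FG G] [MulAction G V]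
    (hact : ∀ (g : G) (u v : V), Γ.Adj (g • u) (g • v) ↔ Γ.Adj u v)
    (hsr : StronglyRigid Γ G)
    (hle : ∀ (g : G) (x : V), ∃ C : ℕ, ∀ n : ℤ, Γ.dist x ((g ^ n) • x) ≤ C) :
    ∃ (x : V) (C : ℕ), ∀ h : G, Γ.dist x (h • x) ≤ C :=
  systolic_locally_elliptic_implies_elliptic_general Γ
    ⟨h18.1, fun n hn hn' => h18.2 n (by omega) (by omega)⟩ G hact hsr hle
end
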